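/- arXiv:2403.20171 — 4 statements merged into one kernel-verified Lean document; each statement's English description precedes it below -/
import Mathlib

section
/- Let n ≥ 2 and let X_1, …, X_n be weakly negatively associated and identically distributed super-Pareto random variables, and let X be a random variable with the same distribution as X_1. Then for every (θ_1, …, θ_n) ∈ Δ_n, X ≤_st θ_1 X_1 + ⋯ + θ_n X_n. -/
/-!
The argument rests on two facts: negative lower orthant dependence,
`P(X_i ≤ c_i for all i) ≤ ∏ P(X_i ≤ c_i)` (`WeaklyNegAssoc.lowerOrthant`), and `X_i ≥ f 1` almost
surely, where `X_i` has the law of `f(Y)` with `Y` Pareto(1).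

Fix `x ≥ f 1` and let `t ≥ 1` be the largest solution of `f t = x`, so that
`P(X ≤ x) = P(Y ≤ t) = 1 - 1/t`. If `∑ θ_i X_i ≤ x` and every `X_i ≥ f 1`, then
`θ_i X_i + (1 - θ_i) f 1 ≤ f t` for each `i`. With `z_i = (t - 1 + θ_i) / θ_i`, the point `t` is the
convex combination `θ_i z_i + (1 - θ_i) 1`, so convexity of `f` gives `X_i ≤ f z_i` whenever
`θ_i > 0`. Hence
`P(∑ θ_i X_i ≤ x) ≤ ∏ (1 - 1/z_i) = ∏ (t - 1) / (t - 1 + θ_i) ≤ (t - 1) / t`,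
the last step being `∏ (1 + a_i) ≥ 1 + ∑ a_i`. For `x < f 1` the left-hand side vanishes.
-/

open MeasureTheory ProbabilityTheory Set

noncomputable section

/-- `Y` follows the Pareto(1) distribution under `P`. -/
def IsPareto1 {Ω : Type} [MeasurableSpace Ω] (P : Measure Ω) (Y : Ω → ℝ) : Prop :=
  Measurable Y ∧ ∀ x : ℝ, (P {ω | Y ω ≤ x}).toReal = if 1 ≤ x then 1 - 1 / x else 0

/-- `X` is super-Pareto: equal in distribution to `f ∘ Y` for some increasing, convex,
non-constant `f` and `Y ~ Pareto(1)`. -/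
def IsSuperPareto {Ω : Type} [MeasurableSpace Ω] (P : Measure Ω) (X : Ω → ℝ) : Prop :=
  Measurable X ∧
    ∃ (Ω' : Type) (_ : MeasurableSpace Ω') (Q : Measure Ω') (Y : Ω' → ℝ) (f : ℝ → ℝ),
      IsProbabilityMeasure Q ∧ IsPareto1 Q Y ∧ Monotone f ∧ ConvexOn ℝ Set.univ f ∧
      (∃ u v : ℝ, f u ≠ f v) ∧ Measure.map X P = Measure.map (f ∘ Y) Q

/-- A decreasing set in `ι → ℝ`. -/
def DecreasingSet {ι : Type} (S : Set (ι → ℝ)) : Prop :=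
  ∀ x ∈ S, ∀ y : ι → ℝ, (∀ i, y i ≤ x i) → y ∈ S

/-- Weak negative association of the family `X`. -/
def WeaklyNegAssoc {Ω : Type} [MeasurableSpace Ω] {ι : Type} (P : Measure Ω)
    (X : ι → Ω → ℝ) : Prop :=
  ∀ (i : ι) (S : Set ({j : ι // j ≠ i} → ℝ)), MeasurableSet S → DecreasingSet S →
    ∀ x : ℝ,
      P ({ω | (fun j : {j : ι // j ≠ i} => X j.1 ω) ∈ S} ∩ {ω | X i ω ≤ x}) ≤
        P {ω | (fun j : {j : ι // j ≠ i} => X j.1 ω) ∈ S} * P {ω | X i ω ≤ x}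

/-- First-order stochastic dominance `X ≤_st Y`: `P(X ≤ x) ≥ P(Y ≤ x)` for all `x`. -/
def StochDom {Ω : Type} [MeasurableSpace Ω] (P : Measure Ω) (X Y : Ω → ℝ) : Prop :=
  ∀ x : ℝ, P {ω | Y ω ≤ x} ≤ P {ω | X ω ≤ x}

/-- Essential infimum of a random variable. -/
def essInfRV {Ω : Type} [MeasurableSpace Ω] (P : Measure Ω) (X : Ω → ℝ) : ℝ :=
  sInf {z : ℝ | 0 < P {ω | X ω ≤ z}}

/-- Value-at-Risk at level `p`. -/
def VaR {Ω : Type} [MeasurableSpace Ω] (P : Measure Ω) (X : Ω → ℝ) (p : ℝ) : ℝ :=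
  sInf {t : ℝ | p ≤ (P {ω | X ω ≤ t}).toReal}

/-- Membership in the standard simplex `Δ_n`. -/
def MemSimplex {n : ℕ} (θ : Fin n → ℝ) : Prop :=
  (∀ i, θ i ∈ Set.Icc (0 : ℝ) 1) ∧ ∑ i, θ i = 1

/-- The probability space is atomless. -/
def AtomlessProb {Ω : Type} [MeasurableSpace Ω] (P : Measure Ω) : Prop :=
  ∀ s : Set Ω, MeasurableSet s → 0 < P s →
    ∃ t : Set Ω, MeasurableSet t ∧ t ⊆ s ∧ 0 < P t ∧ P t < P s

/-- A law-invariant set of random variables. -/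
def LawInvariantSet {Ω : Type} [MeasurableSpace Ω] (P : Measure Ω)
    (D : Set (Ω → ℝ)) : Prop :=
  ∀ U ∈ D, ∀ V : Ω → ℝ, Measure.map U P = Measure.map V P → V ∈ D

/-- The distortion risk measure associated with distortion function `h`. -/
def distortionRM {Ω : Type} [MeasurableSpace Ω] (P : Measure Ω) (h : ℝ → ℝ)
    (Y : Ω → ℝ) : ℝ :=
  (∫ x in Set.Iic (0 : ℝ), (h ((P {ω | x < Y ω}).toReal) - 1)) +
    ∫ x in Set.Ioi (0 : ℝ), h ((P {ω | x < Y ω}).toReal)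

/-- Right derivative (as the infimum of slopes; for convex functions this is the
one-sided derivative). -/
def rightDerivAt (c : ℝ → ℝ) (x : ℝ) : ℝ :=
  sInf ((fun d => (c (x + d) - c x) / d) '' Set.Ioi (0 : ℝ))

/-- Left derivative (as the supremum of slopes; for convex functions this is the
one-sided derivative). -/
def leftDerivAt (c : ℝ → ℝ) (x : ℝ) : ℝ :=
  sSup ((fun d => (c (x - d) - c x) / (-d)) '' Set.Ioi (0 : ℝ))

/-- Expected Shortfall at level `q`. -/
def ES {Ω : Type} [MeasurableSpace Ω] (P : Measure Ω) (X : Ω → ℝ) (q : ℝ) : ℝ :=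
  (1 / (1 - q)) * ∫ u in Set.Ioo q 1, VaR P X u


/-- Weak negative association implies negative lower orthant dependence of every subfamily. -/
lemma WeaklyNegAssoc.lowerOrthant {Ω : Type} [MeasurableSpace Ω] {P : Measure Ω}
    [IsProbabilityMeasure P] {ι : Type} {X : ι → Ω → ℝ}
    (h : WeaklyNegAssoc P X) (c : ι → ℝ) (s : Finset ι) :
    P {ω | ∀ i ∈ s, X i ω ≤ c i} ≤ ∏ i ∈ s, P {ω | X i ω ≤ c i} := by
  classical
  induction s using Finset.induction_on with
  | empty => simp
  | insert i s hi ih =>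
    rw [Finset.prod_insert hi, mul_comm]
    set S : Set ({j : ι // j ≠ i} → ℝ) := {v | ∀ j ∈ s, ∀ hj : j ≠ i, v ⟨j, hj⟩ ≤ c j} with hS
    have hSm : MeasurableSet S := by
      have : S = ⋂ j ∈ s, ⋂ hj : j ≠ i, {v | v ⟨j, hj⟩ ≤ c j} := by
        ext v; simp [hS]
      rw [this]
      refine Finset.measurableSet_biInter _ fun j _ => MeasurableSet.iInter fun hj => ?_
      exact measurableSet_le (measurable_pi_apply _) measurable_const
    have hSd : DecreasingSet S := fun v hv w hw j hj hji => (hw _).trans (hv j hj hji)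
    have hpre : {ω | (fun j : {j : ι // j ≠ i} => X j.1 ω) ∈ S}
        = {ω | ∀ j ∈ s, X j ω ≤ c j} := by
      ext ω
      exact ⟨fun H j hj => H j hj (fun e => hi (e ▸ hj)), fun H j hj _ => H j hj⟩
    have key := h i S hSm hSd (c i)
    rw [hpre] at key
    refine le_trans (measure_mono ?_) (key.trans (mul_le_mul_left ih _))
    intro ω hω
    exact ⟨fun j hj => hω j (Finset.mem_insert_of_mem hj), hω i (Finset.mem_insert_self _ _)⟩

lemma IsPareto1.ae_one_le {Ω : Type} [MeasurableSpace Ω] {Q : Measure Ω}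
    [IsProbabilityMeasure Q] {Y : Ω → ℝ} (h : IsPareto1 Q Y) : ∀ᵐ ω ∂Q, 1 ≤ Y ω := by
  have h1 : ∀ k : ℕ, ∀ᵐ ω ∂Q, ¬ Y ω ≤ 1 - 1 / ((k : ℝ) + 1) := by
    intro k
    have hk : (0 : ℝ) < 1 / ((k : ℝ) + 1) := by positivity
    have := h.2 (1 - 1 / ((k : ℝ) + 1))
    rw [if_neg (by linarith), ENNReal.toReal_eq_zero_iff] at this
    rw [ae_iff]
    simpa using this.resolve_right (measure_ne_top _ _)
  filter_upwards [ae_all_iff.2 h1] with ω hω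
  by_contra! hlt
  obtain ⟨k, hk⟩ := exists_nat_one_div_lt (sub_pos.2 hlt)
  exact hω k (by linarith)

/-- A nonconstant increasing convex function tends to infinity, hence for every `x ≥ f 1` there is
a largest solution `t` of `f t = x`. -/
lemma exists_largest_preimage {f : ℝ → ℝ} (hm : Monotone f) (hc : ConvexOn ℝ Set.univ f)
    (hne : ∃ u v : ℝ, f u ≠ f v) {x : ℝ} (hx : f 1 ≤ x) :
    ∃ t, 1 ≤ t ∧ f t = x ∧ ∀ y, t < y → x < f y := by
  obtain ⟨u, v, huv, hfuv⟩ : ∃ u v, u < v ∧ f u < f v := by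
    obtain ⟨u, v, h⟩ := hne
    rcases lt_trichotomy u v with h' | h' | h'
    · exact ⟨u, v, h', lt_of_le_of_ne (hm h'.le) h⟩
    · exact absurd (by rw [h']) h
    · exact ⟨v, u, h', lt_of_le_of_ne (hm h'.le) (Ne.symm h)⟩
  have hcont : Continuous f := continuousOn_univ.1 (hc.continuousOn isOpen_univ)
  -- Past `v`, convexity keeps `f` above the chord through `u` and `v`.
  have hgrow : ∀ y, v < y → f v + (f v - f u) / (v - u) * (y - v) ≤ f y := by
    intro y hy
    have := hc.slope_mono_adjacent (mem_univ u) (mem_univ y) huv hy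
    rw [le_div_iff₀ (sub_pos.2 hy)] at this
    linarith
  have hsl : 0 < (f v - f u) / (v - u) := div_pos (by linarith) (by linarith)
  have hbdd : BddAbove {y | f y ≤ x} := by
    refine ⟨v + (|x - f v|) / ((f v - f u) / (v - u)), fun y hy => ?_⟩
    rcases le_or_gt y v with h | h
    · have : 0 ≤ |x - f v| / ((f v - f u) / (v - u)) := by positivity
      linarith
    · have h1 := hgrow y h
      have h2 : f y ≤ x := hy
      rw [← sub_le_iff_le_add', le_div_iff₀ hsl]
      linarith [le_abs_self (x - f v), mul_comm ((f v - f u) / (v - u)) (y - v)]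
  have hcl : IsClosed {y | f y ≤ x} := isClosed_le hcont continuous_const
  have hmem : f (sSup {y | f y ≤ x}) ≤ x := hcl.csSup_mem ⟨1, hx⟩ hbdd
  have hgt : ∀ y, sSup {y | f y ≤ x} < y → x < f y := by
    intro y hy
    by_contra! h
    exact absurd (le_csSup hbdd h) (not_le.2 hy)
  refine ⟨sSup {y | f y ≤ x}, le_csSup hbdd hx, le_antisymm hmem ?_, hgt⟩
  have ht : Filter.Tendsto f (nhdsWithin (sSup {y | f y ≤ x}) (Ioi (sSup {y | f y ≤ x})))
      (nhds (f (sSup {y | f y ≤ x}))) := hcont.continuousAt.tendsto.mono_left nhdsWithin_le_nhds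
  refine ge_of_tendsto ht ?_
  filter_upwards [self_mem_nhdsWithin] with y hy using (hgt y hy).le

lemma one_add_sum_le_prod' {ι : Type} (s : Finset ι) (a : ι → ℝ) (ha : ∀ i ∈ s, 0 ≤ a i) :
    1 + ∑ i ∈ s, a i ≤ ∏ i ∈ s, (1 + a i) := by
  classical
  induction s using Finset.induction_on with
  | empty => simp
  | insert i s hi ih =>
    rw [Finset.sum_insert hi, Finset.prod_insert hi]
    have h1 := ih fun j hj => ha j (Finset.mem_insert_of_mem hj)
    have h2 := ha i (Finset.mem_insert_self _ _)
    have h3 : 0 ≤ ∑ j ∈ s, a j :=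
      Finset.sum_nonneg fun j hj => ha j (Finset.mem_insert_of_mem hj)
    nlinarith

lemma prod_div_add_le {ι : Type} (s : Finset ι) (θ : ι → ℝ) (hpos : ∀ i ∈ s, 0 < θ i)
    (hsum : ∑ i ∈ s, θ i = 1) {u : ℝ} (hu : 0 ≤ u) :
    ∏ i ∈ s, u / (u + θ i) ≤ u / (u + 1) := by
  rcases hu.eq_or_lt with rfl | hu
  · obtain ⟨i, hi⟩ : s.Nonempty := by
      by_contra h
      rw [Finset.not_nonempty_iff_eq_empty.1 h] at hsum
      simp at hsum
    rw [Finset.prod_eq_zero hi (by simp)]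
    simp
  · have h := one_add_sum_le_prod' s (fun i => θ i / u) fun i hi => (div_pos (hpos i hi) hu).le
    rw [← Finset.sum_div, hsum] at h
    have e : ∀ i ∈ s, u / (u + θ i) = (1 + θ i / u)⁻¹ := by
      intro i hi
      have := hpos i hi
      have : u + θ i ≠ 0 := by positivity
      field_simp
    have e' : u / (u + 1) = (1 + 1 / u)⁻¹ := by
      field_simp
    rw [Finset.prod_congr rfl e, Finset.prod_inv_distrib, e']
    exact inv_anti₀ (by positivity) h

/-- For WNAID super-Pareto losses, the diversified portfolio stochastically
dominates a single loss. -/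
theorem stmt_0 {Ω : Type} [MeasurableSpace Ω] (P : Measure Ω) [IsProbabilityMeasure P]
    (n : ℕ) (hn : 2 ≤ n) (X : Fin n → Ω → ℝ) (X0 : Ω → ℝ) (hX0 : Measurable X0)
    (hSP : ∀ i, IsSuperPareto P (X i))
    (hWNA : WeaklyNegAssoc P X)
    (hid : ∀ i j, Measure.map (X i) P = Measure.map (X j) P)
    (hX0d : Measure.map X0 P = Measure.map (X ⟨0, by omega⟩) P)
    (θ : Fin n → ℝ) (hθ : MemSimplex θ) :
    StochDom P X0 (fun ω => ∑ i, θ i * X i ω) := by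
  intro x
  obtain ⟨-, Ω', _, Q, Y, f, hQ, hY, hm, hc, hne, hmap⟩ := hSP ⟨0, by omega⟩
  have hfY : Measurable (f ∘ Y) := hm.measurable.comp hY.1
  have hXm : ∀ i, Measurable (X i) := fun i => (hSP i).1
  have hmapi : ∀ i, Measure.map (X i) P = Measure.map (f ∘ Y) Q := fun i => (hid i _).trans hmap
  -- Transfer of distribution functions from `P` to `Q`.
  have hcdf : ∀ (Z : Ω → ℝ), Measurable Z → Measure.map Z P = Measure.map (f ∘ Y) Q →
      ∀ y, P {ω | Z ω ≤ y} = Q {ω | f (Y ω) ≤ y} := by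
    intro Z hZ hZm y
    have := congrArg (fun μ => μ (Iic y)) hZm
    simp only [Measure.map_apply hZ measurableSet_Iic,
      Measure.map_apply hfY measurableSet_Iic] at this
    exact this
  have hge : ∀ᵐ ω ∂P, ∀ i, f 1 ≤ X i ω := by
    rw [ae_all_iff]
    intro i
    have h1 : ∀ᵐ y ∂(Measure.map (f ∘ Y) Q), f 1 ≤ y := by
      rw [ae_map_iff hfY.aemeasurable measurableSet_Ici]
      filter_upwards [hY.ae_one_le] with ω hω using hm hω
    rw [← hmapi i, ae_map_iff (hXm i).aemeasurable measurableSet_Ici] at h1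
    exact h1
  have h0 : ∀ i, 0 ≤ θ i := fun i => (hθ.1 i).1
  -- Replacing all coordinates but the `i`-th by the lower bound `f 1`.
  have hone : ∀ ω, (∀ i, f 1 ≤ X i ω) → ∀ i,
      θ i * X i ω + (1 - θ i) * f 1 ≤ ∑ j, θ j * X j ω := by
    intro ω hω i
    have h1 : θ i * (X i ω - f 1) ≤ ∑ j, θ j * (X j ω - f 1) :=
      Finset.single_le_sum (f := fun j => θ j * (X j ω - f 1))
        (fun j _ => mul_nonneg (h0 j) (sub_nonneg.2 (hω j))) (Finset.mem_univ i)
    simp only [mul_sub, Finset.sum_sub_distrib] at h1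
    rw [← Finset.sum_mul, hθ.2] at h1
    linarith
  rcases lt_or_ge x (f 1) with hx | hx
  · have : P {ω | ∑ i, θ i * X i ω ≤ x} = 0 := by
      rw [← nonpos_iff_eq_zero, ← (ae_iff.1 hge)]
      refine measure_mono fun ω hω hω' => ?_
      have h1 := hone ω hω' ⟨0, by omega⟩
      have h2 := mul_le_mul_of_nonneg_left (hω' ⟨0, by omega⟩) (h0 ⟨0, by omega⟩)
      have h3 : ∑ i, θ i * X i ω ≤ x := hω
      linarith
    simp only [this, zero_le]
  obtain ⟨t, ht1, hft, hgt⟩ := exists_largest_preimage hm hc hne hx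
  -- Beyond `t` the function `f` is strictly increasing, so its sublevel sets are half-lines.
  have hcdfY : ∀ z, t ≤ z → ∀ Z : Ω → ℝ, Measurable Z →
      Measure.map Z P = Measure.map (f ∘ Y) Q → (P {ω | Z ω ≤ f z}).toReal = 1 - 1 / z := by
    intro z hz Z hZ hZm
    rw [hcdf Z hZ hZm]
    have : {ω | f (Y ω) ≤ f z} = {ω | Y ω ≤ z} := by
      ext ω
      refine ⟨fun h => ?_, fun h => hm h⟩
      by_contra hlt
      have hlt : z < Y ω := not_le.1 hlt
      have h : f (Y ω) ≤ f z := h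
      rcases hz.eq_or_lt with rfl | hz
      · linarith [hgt _ hlt]
      · have h1 := hc.slope_mono_adjacent (mem_univ t) (mem_univ (Y ω)) hz hlt
        have h2 : 0 < (f z - f t) / (z - t) := div_pos (by linarith [hgt z hz]) (by linarith)
        have h3 : (f (Y ω) - f z) / (Y ω - z) ≤ 0 :=
          div_nonpos_of_nonpos_of_nonneg (by linarith) (by linarith)
        linarith
    rw [this, hY.2, if_pos (ht1.trans hz)]
  set s : Finset (Fin n) := Finset.univ.filter fun i => θ i ≠ 0 with hs
  have hspos : ∀ i ∈ s, 0 < θ i := fun i hi =>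
    lt_of_le_of_ne (h0 i) (Ne.symm (Finset.mem_filter.1 hi).2)
  have hssum : ∑ i ∈ s, θ i = 1 := by rw [hs, Finset.sum_filter_ne_zero, hθ.2]
  let z : Fin n → ℝ := fun i => (t - 1 + θ i) / θ i
  have hzt : ∀ i ∈ s, t ≤ z i := by
    intro i hi
    rw [le_div_iff₀ (hspos i hi)]
    nlinarith [(hθ.1 i).2]
  have hcover : P {ω | ∑ i, θ i * X i ω ≤ x} ≤ P {ω | ∀ i ∈ s, X i ω ≤ f (z i)} := by
    refine measure_mono_ae ?_
    filter_upwards [hge] with ω hω hle i hi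
    have hp := hspos i hi
    have hle : ∑ i, θ i * X i ω ≤ x := hle
    have hcomb : θ i • z i + (1 - θ i) • (1 : ℝ) = t := by
      simp only [z, smul_eq_mul]
      field_simp
      ring
    have hconv := hc.2 (mem_univ (z i)) (mem_univ (1 : ℝ)) hp.le
      (sub_nonneg.2 (hθ.1 i).2) (by ring)
    rw [hcomb, hft, smul_eq_mul, smul_eq_mul] at hconv
    exact le_of_mul_le_mul_left (by linarith [hone ω hω i]) hp
  refine (hcover.trans (hWNA.lowerOrthant (fun i => f (z i)) s)).trans ?_
  have hfin : ∏ i ∈ s, P {ω | X i ω ≤ f (z i)} ≠ ⊤ :=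
    ENNReal.prod_ne_top fun i _ => measure_ne_top _ _
  rw [← ENNReal.toReal_le_toReal hfin (measure_ne_top _ _), ENNReal.toReal_prod]
  have hR : (P {ω | X0 ω ≤ x}).toReal = 1 - 1 / t := by
    rw [← hft]
    exact hcdfY t le_rfl X0 hX0 (hX0d.trans hmap)
  have hL : ∀ i ∈ s, (P {ω | X i ω ≤ f (z i)}).toReal = (t - 1) / (t - 1 + θ i) := by
    intro i hi
    rw [hcdfY (z i) (hzt i hi) (X i) (hXm i) (hmapi i)]
    have hp := hspos i hi
    have : t - 1 + θ i ≠ 0 := by linarith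
    simp only [z]
    field_simp
    ring
  rw [hR, Finset.prod_congr rfl hL]
  refine (prod_div_add_le s θ hspos hssum (sub_nonneg.2 ht1)).trans_eq ?_
  have : t ≠ 0 := by linarith
  rw [sub_add_cancel]
  field_simp

end
end

section
/- Let X_1, X_2, … be weakly negatively associated and identically distributed super-Pareto random variables, X a random variable with the same distribution as X_1, W_1, W_2, … positive random variables, and N a random variable with values in {0, 1, 2, …}, such that X, the sequence (X_i)_{i≥1}, the sequence (W_i)_{i≥1}, and N are mutually independent. Define R = (Σ_{i=1}^N W_i X_i)/(Σ_{i=1}^N W_i), with R = 0 on the event {N = 0}. Then X·1_{{N ≥ 1}} ≤_st R; moreover, if P(N ≥ 2) > 0, then P(R ≤ t) < P(X·1_{{N ≥ 1}} ≤ t) for every t > z_X. -/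
/-!
The argument compares odds. Let `F` be the distribution function of `X = f(Y)` and `z = f 1`.
For `t > z` write `F t = h / (h + 1)`; if `f y = t`, then `h = y - 1`. Convexity of `f` yields
`F (z + (t - z) / θ) ≤ h / (h + θ)` for `0 < θ ≤ 1` (`superPareto_cdf`).

For fixed positive weights with normalization `θ`, all `X i` are almost surely at least `z`, so an
average at most `t` forces `X i ≤ z + (t - z) / θ i` for every `i`. Weak negative association
bounds the probability of this lower orthant by the product of the marginal probabilities
(`wna_lower_orthant`), hence by `∏ h / (h + θ i) = (∏ (1 + θ i / h))⁻¹ ≤ (1 + 1 / h)⁻¹ = F t`,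
and the inequality is strict when there are at least two factors (`prod_odds_le`,
`weighted_average_dom`).

Random weights and a random number of summands are treated by conditioning: the pair `(W, N)` is
independent of the sequence `X` and of `X0`, so both probabilities are integrals over the law of
`(W, N)` of the corresponding probabilities for fixed weights, and these are compared pointwise.
-/

open MeasureTheory ProbabilityTheory Set

noncomputable section

/-- Weak negative association of an infinite sequence: every finite subfamily is weakly
negatively associated. -/
def WeaklyNegAssocSeq {Ω : Type} [MeasurableSpace Ω] (P : Measure Ω)
    (X : ℕ → Ω → ℝ) : Prop :=
  ∀ s : Finset ℕ, WeaklyNegAssoc P (fun i : {x // x ∈ s} => X i.1)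

/-! ### The distribution function of a super-Pareto variable -/

lemma cdf_eq_of_map_eq {Ω Ω' : Type} [MeasurableSpace Ω] [MeasurableSpace Ω'] {P : Measure Ω}
    {Q : Measure Ω'} {U : Ω → ℝ} {V : Ω' → ℝ} (hU : Measurable U) (hV : Measurable V)
    (h : Measure.map U P = Measure.map V Q) (x : ℝ) : P {ω | U ω ≤ x} = Q {ω | V ω ≤ x} := by
  have h1 : Measure.map U P (Iic x) = Measure.map V Q (Iic x) := by rw [h]
  rwa [Measure.map_apply hU measurableSet_Iic, Measure.map_apply hV measurableSet_Iic] at h1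

/-- The three facts about a super-Pareto law used below, with `z = f 1`. For `t > z` the number
`h` is `y - 1`, where `f y = t`, so that `h` equals the odds `F t / (1 - F t)`. Convexity of `f`
gives `f (1 + h / θ) ≥ z + (t - z) / θ`: stretching the excess over `z` by `1 / θ` multiplies
the odds by at most `1 / θ`. -/
lemma superPareto_cdf {Ω : Type} [MeasurableSpace Ω] {P : Measure Ω} {X : Ω → ℝ}
    (hX : IsSuperPareto P X) :
    ∃ z : ℝ, (∀ x < z, P {ω | X ω ≤ x} = 0) ∧
      ∀ t > z, ∃ h : ℝ, 0 < h ∧ P.real {ω | X ω ≤ t} = h / (h + 1) ∧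
        ∀ θ : ℝ, 0 < θ → θ ≤ 1 → P.real {ω | X ω ≤ z + (t - z) / θ} ≤ h / (h + θ) := by
  obtain ⟨hXm, Ω', _, Q, Y, f, hQ, ⟨hYm, hY⟩, hmono, hconv, ⟨u, v, huv⟩, hmap⟩ := hX
  have hfm : Measurable f := hmono.measurable
  have hlaw : ∀ x, P {ω | X ω ≤ x} = Q {ω | f (Y ω) ≤ x} :=
    cdf_eq_of_map_eq hXm (hfm.comp hYm) hmap
  have hYlt : ∀ x < 1, Q {ω | Y ω ≤ x} = 0 := by
    intro x hx
    have h1 := hY x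
    rw [if_neg (not_le.2 hx), ENNReal.toReal_eq_zero_iff] at h1
    exact h1.resolve_right (measure_ne_top _ _)
  have hYreal : ∀ x, 1 ≤ x → Q.real {ω | Y ω ≤ x} = 1 - 1 / x := by
    intro x hx
    have h1 := hY x
    rwa [if_pos hx] at h1
  have hcont : Continuous f := by
    rw [← continuousOn_univ]
    exact hconv.continuousOn isOpen_univ
  have hunb : ∀ t, ∃ y, 1 ≤ y ∧ t ≤ f y := by
    intro t
    wlog hlt : u < v generalizing u v
    · exact this v u huv.symm (lt_of_le_of_ne (not_lt.1 hlt) fun h => huv (by rw [h]))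
    have hf : f u < f v := lt_of_le_of_ne (hmono hlt.le) huv
    -- Beyond `v` the graph lies above the chord through `u` and `v`, so this point reaches `t`.
    set y := max (max 1 (v + 1)) (v + (t - f v) * (v - u) / (f v - f u)) with hy
    have hy1 : v + 1 ≤ y := (le_max_right _ _).trans (le_max_left _ _)
    refine ⟨y, (le_max_left _ _).trans (le_max_left _ _), ?_⟩
    have hs := hconv.slope_mono_adjacent (mem_univ u) (mem_univ y) hlt (by linarith)
    have hy2 : v + (t - f v) * (v - u) / (f v - f u) ≤ y := le_max_right _ _
    have h1 : 0 < f v - f u := by linarith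
    have h2 : 0 < v - u := by linarith
    have h3 : 0 < y - v := by linarith
    have h4 : (t - f v) * (v - u) / (f v - f u) ≤ y - v := by linarith
    rw [div_le_iff₀ h1] at h4
    rw [div_le_div_iff₀ h2 h3] at hs
    have : (t - f v) * (v - u) ≤ (f y - f v) * (v - u) := by linarith
    have := le_of_mul_le_mul_right this h2
    linarith
  refine ⟨f 1, ?_, ?_⟩
  · intro x hx
    rw [hlaw]
    have h0 : Q {ω | Y ω < 1} = 0 := by
      have : {ω | Y ω < 1} = ⋃ n : ℕ, {ω | Y ω ≤ 1 - 1 / ((n : ℝ) + 1)} := by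
        ext ω
        simp only [mem_ofPred_eq, mem_iUnion]
        constructor
        · intro h
          obtain ⟨n, hn⟩ := exists_nat_one_div_lt (sub_pos.2 h)
          exact ⟨n, by linarith⟩
        · rintro ⟨n, hn⟩
          have : 0 < 1 / ((n : ℝ) + 1) := by positivity
          linarith
      rw [this, measure_iUnion_null_iff]
      intro n
      apply hYlt
      have : 0 < 1 / ((n : ℝ) + 1) := by positivity
      linarith
    refine measure_mono_null ?_ h0
    intro ω hω
    simp only [mem_ofPred_eq] at hω ⊢
    by_contra hc
    have := hmono (not_lt.1 hc)
    linarith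
  · intro t ht
    obtain ⟨b, hb1, hb⟩ := hunb t
    obtain ⟨y, hy, rfl⟩ := intermediate_value_Icc hb1 hcont.continuousOn ⟨ht.le, hb⟩
    have hy1 : 1 < y := lt_of_le_of_ne hy.1 fun h => by rw [← h] at ht; exact lt_irrefl _ ht
    -- `f` may be flat near `1`, but it is strictly increasing once it has left the value `f 1`.
    have hstrict := hconv.strictMonoOn (mem_univ 1) hy1 ht
    rw [univ_inter] at hstrict
    have hinv : ∀ x c, y ≤ c → f x ≤ f c → x ≤ c := by
      intro x c hc hxc
      by_contra hlt
      have := hstrict (mem_Ici.2 hc) (mem_Ici.2 (hc.trans (not_le.1 hlt).le)) (not_le.1 hlt)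
      linarith
    refine ⟨y - 1, by linarith, ?_, ?_⟩
    · rw [Measure.real, hlaw]
      have : {ω | f (Y ω) ≤ f y} = {ω | Y ω ≤ y} := by
        ext ω
        exact ⟨fun h => hinv _ _ le_rfl h, fun h => hmono h⟩
      rw [this]
      have := hYreal y hy1.le
      rw [Measure.real] at this
      rw [this]
      have : y ≠ 0 := by linarith
      rw [sub_add_cancel, sub_div, div_self this]
    · intro θ hθ hθ1
      have hc : y ≤ 1 + (y - 1) / θ := by
        have : y - 1 ≤ (y - 1) / θ := by
          rw [le_div_iff₀ hθ]
          nlinarith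
        linarith
      have hcv : f 1 + (f y - f 1) / θ ≤ f (1 + (y - 1) / θ) := by
        have h1 := hconv.2 (mem_univ 1) (mem_univ (1 + (y - 1) / θ))
          (sub_nonneg.2 hθ1) hθ.le (by ring)
        simp only [smul_eq_mul] at h1
        have h2 : (1 - θ) * 1 + θ * (1 + (y - 1) / θ) = y := by
          field_simp
          ring
        rw [h2] at h1
        have h3 : (f y - f 1) / θ ≤ f (1 + (y - 1) / θ) - f 1 := by
          rw [div_le_iff₀ hθ]
          linarith
        linarith
      rw [Measure.real, hlaw]
      have h1 : Q.real {ω | f (Y ω) ≤ f 1 + (f y - f 1) / θ}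
          ≤ Q.real {ω | Y ω ≤ 1 + (y - 1) / θ} := by
        refine measureReal_mono (fun ω hω => ?_) (measure_ne_top _ _)
        exact hinv _ _ hc (le_trans hω hcv)
      refine h1.trans ?_
      rw [hYreal _ (by linarith)]
      apply le_of_eq
      have h5 : 0 < y - 1 := by linarith
      have h6 : θ + (y - 1) ≠ 0 := by positivity
      have h7 : y - 1 + θ ≠ 0 := by positivity
      have h8 : 1 + (y - 1) / θ = (θ + (y - 1)) / θ := by field_simp
      rw [h8]
      field_simp
      ring

/-! ### Negative lower orthant dependence -/

lemma wna_lower_orthant {Ω : Type} [MeasurableSpace Ω] {P : Measure Ω} [IsProbabilityMeasure P]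
    {X : ℕ → Ω → ℝ} (hWNA : WeaklyNegAssocSeq P X) (c : ℕ → ℝ) (n : ℕ) :
    P {ω | ∀ i < n, X i ω ≤ c i} ≤ ∏ i ∈ Finset.range n, P {ω | X i ω ≤ c i} := by
  induction n with
  | zero => simp
  | succ n ih =>
    have hn : n ∈ Finset.range (n + 1) := by simp
    have h := hWNA (Finset.range (n + 1)) ⟨n, hn⟩ {y | ∀ j, y j ≤ c j.1.1} (by
        have : {y : {j : {x // x ∈ Finset.range (n + 1)} // j ≠ ⟨n, hn⟩} → ℝ |
            ∀ j, y j ≤ c j.1.1} = ⋂ j, {y | y j ≤ c j.1.1} := by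
          ext y
          simp
        rw [this]
        exact MeasurableSet.iInter fun j =>
          measurableSet_le (measurable_pi_apply j) measurable_const)
      (fun x hx y hyx j => (hyx j).trans (hx j)) (c n)
    have hset : {ω | (fun j : {j : {x // x ∈ Finset.range (n + 1)} // j ≠ ⟨n, hn⟩} =>
        X j.1.1 ω) ∈ {y : {j : {x // x ∈ Finset.range (n + 1)} // j ≠ ⟨n, hn⟩} → ℝ |
          ∀ j, y j ≤ c j.1.1}} = {ω | ∀ i < n, X i ω ≤ c i} := by
      ext ω
      simp only [mem_ofPred_eq]
      constructor
      · intro h i hi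
        exact h ⟨⟨i, Finset.mem_range.2 (by omega)⟩, fun he => by
          have := congrArg Subtype.val he
          simp only at this
          omega⟩
      · rintro h ⟨⟨i, hi⟩, hne⟩
        refine h i ?_
        have h1 : i ≠ n := fun he => hne (Subtype.ext he)
        have := Finset.mem_range.1 hi
        omega
    rw [hset] at h
    rw [Finset.prod_range_succ]
    refine le_trans (measure_mono ?_) (h.trans (mul_le_mul_left ih _))
    intro ω hω
    exact ⟨fun i hi => hω i (by omega), hω n (by omega)⟩

/-! ### Deterministic weights -/

lemma one_add_sum_le_prod_range (a : ℕ → ℝ) (ha : ∀ i, 0 < a i) (n : ℕ) :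
    1 + ∑ i ∈ Finset.range n, a i ≤ ∏ i ∈ Finset.range n, (1 + a i) := by
  induction n with
  | zero => simp
  | succ n ih =>
    rw [Finset.sum_range_succ, Finset.prod_range_succ]
    have h1 : 0 ≤ ∑ i ∈ Finset.range n, a i := Finset.sum_nonneg fun i _ => (ha i).le
    nlinarith [ha n]

lemma one_add_sum_lt_prod_range (a : ℕ → ℝ) (ha : ∀ i, 0 < a i) (n : ℕ) (hn : 2 ≤ n) :
    1 + ∑ i ∈ Finset.range n, a i < ∏ i ∈ Finset.range n, (1 + a i) := by
  obtain ⟨m, rfl⟩ : ∃ m, n = m + 1 := ⟨n - 1, by omega⟩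
  rw [Finset.sum_range_succ, Finset.prod_range_succ]
  have h1 : 0 < ∑ i ∈ Finset.range m, a i :=
    Finset.sum_pos (fun i _ => ha i) (by simp; omega)
  have := one_add_sum_le_prod_range a ha m
  nlinarith [ha m, mul_pos h1 (ha m)]

/-- For weights summing to `1`, the product of the bounds `h / (h + θ i)` is the reciprocal
of `∏ (1 + θ i / h)`, which is at least `1 + 1 / h`. -/
lemma prod_odds_le (θ : ℕ → ℝ) (hθ : ∀ i, 0 < θ i) (n : ℕ)
    (hsum : ∑ i ∈ Finset.range n, θ i = 1) (h : ℝ) (hh : 0 < h) :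
    (∏ i ∈ Finset.range n, h / (h + θ i)) ≤ h / (h + 1) ∧
      (2 ≤ n → (∏ i ∈ Finset.range n, h / (h + θ i)) < h / (h + 1)) := by
  have h1 : ∏ i ∈ Finset.range n, h / (h + θ i)
      = (∏ i ∈ Finset.range n, (1 + θ i / h))⁻¹ := by
    rw [← Finset.prod_inv_distrib]
    refine Finset.prod_congr rfl fun i _ => ?_
    have := hθ i
    have : h + θ i ≠ 0 := by positivity
    field_simp
  have h2 : h / (h + 1) = (1 + ∑ i ∈ Finset.range n, θ i / h)⁻¹ := by
    rw [← Finset.sum_div, hsum]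
    field_simp
  have ha : ∀ i, 0 < θ i / h := fun i => div_pos (hθ i) hh
  have hpos : 0 < 1 + ∑ i ∈ Finset.range n, θ i / h := by
    have : 0 ≤ ∑ i ∈ Finset.range n, θ i / h := Finset.sum_nonneg fun i _ => (ha i).le
    linarith
  rw [h1, h2]
  exact ⟨inv_anti₀ hpos (one_add_sum_le_prod_range _ ha n),
    fun hn => inv_strictAnti₀ hpos (one_add_sum_lt_prod_range _ ha n hn)⟩

/-- Stochastic dominance for a fixed number `n ≥ 1` of summands and fixed positive weights. Up to
a null set all `X i` are at least `z`, so the average can be at most `t` only if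
`X i ≤ z + (t - z) / θ i` for every `i`, where `θ` denotes the normalized weights. -/
lemma weighted_average_dom {Ω : Type} [MeasurableSpace Ω] {P : Measure Ω}
    [IsProbabilityMeasure P] {X : ℕ → Ω → ℝ} (hXm : ∀ i, Measurable (X i))
    (hSP : IsSuperPareto P (X 0)) (hWNA : WeaklyNegAssocSeq P X)
    (hid : ∀ i j, Measure.map (X i) P = Measure.map (X j) P)
    (w : ℕ → ℝ) (hw : ∀ i, 0 < w i) (n : ℕ) (hn : 1 ≤ n) (t : ℝ) :
    P {ω | (∑ i ∈ Finset.range n, w i * X i ω) / (∑ i ∈ Finset.range n, w i) ≤ t}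
        ≤ P {ω | X 0 ω ≤ t} ∧
      (2 ≤ n → essInfRV P (X 0) < t →
        P {ω | (∑ i ∈ Finset.range n, w i * X i ω) / (∑ i ∈ Finset.range n, w i) ≤ t}
          < P {ω | X 0 ω ≤ t}) := by
  obtain ⟨z, hz, hodds⟩ := superPareto_cdf hSP
  have hlaw : ∀ i x, P {ω | X i ω ≤ x} = P {ω | X 0 ω ≤ x} :=
    fun i => cdf_eq_of_map_eq (hXm i) (hXm 0) (hid i 0)
  have hge : ∀ᵐ ω ∂P, ∀ i, z ≤ X i ω := by
    rw [ae_all_iff]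
    intro i
    rw [ae_iff]
    have : {ω | ¬ z ≤ X i ω} = ⋃ k : ℕ, {ω | X i ω ≤ z - 1 / ((k : ℝ) + 1)} := by
      ext ω
      simp only [mem_ofPred_eq, mem_iUnion, not_le]
      constructor
      · intro h
        obtain ⟨k, hk⟩ := exists_nat_one_div_lt (sub_pos.2 h)
        exact ⟨k, by linarith⟩
      · rintro ⟨k, hk⟩
        have : 0 < 1 / ((k : ℝ) + 1) := by positivity
        linarith
    rw [this, measure_iUnion_null_iff]
    intro k
    rw [hlaw]
    apply hz
    have : 0 < 1 / ((k : ℝ) + 1) := by positivity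
    linarith
  set s := ∑ i ∈ Finset.range n, w i with hs
  have hspos : 0 < s := Finset.sum_pos (fun i _ => hw i) (by simp; omega)
  -- Each excess `w i * (X i - z)` is at most the total excess.
  have hkey : ∀ᵐ ω ∂P, (∑ i ∈ Finset.range n, w i * X i ω) / s ≤ t →
      ∀ i < n, w i * (X i ω - z) ≤ (t - z) * s := by
    filter_upwards [hge] with ω hω hle i hi
    rw [div_le_iff₀ hspos] at hle
    have h1 : w i * (X i ω - z) ≤ ∑ j ∈ Finset.range n, w j * (X j ω - z) :=
      Finset.single_le_sum (f := fun j => w j * (X j ω - z))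
        (fun j _ => mul_nonneg (hw j).le (sub_nonneg.2 (hω j))) (Finset.mem_range.2 hi)
    have h2 : ∑ j ∈ Finset.range n, w j * (X j ω - z)
        = ∑ j ∈ Finset.range n, w j * X j ω - s * z := by
      rw [hs, Finset.sum_mul, ← Finset.sum_sub_distrib]
      exact Finset.sum_congr rfl fun j _ => by ring
    linarith
  rcases le_or_gt t z with htz | htz
  · constructor
    · apply measure_mono_ae
      filter_upwards [hkey, hge] with ω h1 h2 h3
      have h4 := h1 h3 0 (by omega)
      have h5 : (t - z) * s ≤ 0 := mul_nonpos_of_nonpos_of_nonneg (by linarith) hspos.le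
      have h6 := h2 0
      have h7 := mul_nonneg (hw 0).le (sub_nonneg.2 h6)
      have h8 : (t - z) * s = 0 := by linarith
      rcases mul_eq_zero.1 h8 with h9 | h9
      · have : w 0 * (X 0 ω - z) = 0 := by linarith
        rcases mul_eq_zero.1 this with h10 | h10
        · exact absurd h10 (hw 0).ne'
        · change X 0 ω ≤ t
          linarith
      · exact absurd h9 (ne_of_gt hspos)
    · intro _ hlt
      -- The essential infimum is at least `z`, so `t` cannot exceed it here.
      exfalso
      have hne : {x : ℝ | 0 < P {ω | X 0 ω ≤ x}}.Nonempty := by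
        obtain ⟨h, hh, hF, -⟩ := hodds (z + 1) (by linarith)
        refine ⟨z + 1, ?_⟩
        change 0 < P {ω | X 0 ω ≤ z + 1}
        refine pos_iff_ne_zero.2 fun h0 => ?_
        rw [Measure.real, h0, ENNReal.toReal_zero] at hF
        have : 0 < h / (h + 1) := by positivity
        linarith
      have : z ≤ essInfRV P (X 0) := by
        refine le_csInf hne fun x hx => ?_
        by_contra hc
        exact (ne_of_gt hx) (hz x (not_le.1 hc))
      linarith
  · obtain ⟨h, hh, hF, hbd⟩ := hodds t htz
    set θ : ℕ → ℝ := fun i => w i / s with hθ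
    have hθpos : ∀ i, 0 < θ i := fun i => div_pos (hw i) hspos
    have hθsum : ∑ i ∈ Finset.range n, θ i = 1 := by
      simp only [hθ]
      rw [← Finset.sum_div]
      exact div_self hspos.ne'
    have hθle : ∀ i < n, θ i ≤ 1 := fun i hi =>
      hθsum ▸ Finset.single_le_sum (fun j _ => (hθpos j).le) (Finset.mem_range.2 hi)
    set A := {ω | (∑ i ∈ Finset.range n, w i * X i ω) / s ≤ t} with hA
    have h1 : P A ≤ ∏ i ∈ Finset.range n, P {ω | X i ω ≤ z + (t - z) / θ i} := by
      refine le_trans ?_ (wna_lower_orthant hWNA (fun i => z + (t - z) / θ i) n)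
      apply measure_mono_ae
      filter_upwards [hkey] with ω h1 h2 i hi
      have h3 := h1 h2 i hi
      have h4 : X i ω - z ≤ (t - z) / θ i := by
        rw [le_div_iff₀ (hθpos i)]
        simp only [hθ]
        rw [mul_div_assoc', div_le_iff₀ hspos]
        linarith
      change X i ω ≤ z + (t - z) / θ i
      linarith
    have h2 : P.real A ≤ ∏ i ∈ Finset.range n, h / (h + θ i) := by
      have h3 := ENNReal.toReal_mono
        (ENNReal.prod_ne_top fun i _ => measure_ne_top P _) h1
      rw [ENNReal.toReal_prod] at h3
      refine h3.trans (Finset.prod_le_prod (fun _ _ => ENNReal.toReal_nonneg) fun i hi => ?_)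
      rw [hlaw]
      exact hbd (θ i) (hθpos i) (hθle i (Finset.mem_range.1 hi))
    have h3 := prod_odds_le θ hθpos n hθsum h hh
    rw [← hF] at h3
    exact ⟨(ENNReal.toReal_le_toReal (measure_ne_top _ _) (measure_ne_top _ _)).1
        (h2.trans h3.1),
      fun h2n _ => (ENNReal.toReal_lt_toReal (measure_ne_top _ _) (measure_ne_top _ _)).1
        (h2.trans_lt (h3.2 h2n))⟩

/-! ### Conditioning on the weights and the number of summands -/

lemma measure_eq_lintegral_of_indepFun {Ω α β : Type} [MeasurableSpace Ω] [MeasurableSpace α]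
    [MeasurableSpace β] {P : Measure Ω} [IsProbabilityMeasure P] {A : Ω → α} {V : Ω → β}
    (hA : Measurable A) (hV : Measurable V) (hAV : IndepFun A V P) {S : Set (α × β)}
    (hS : MeasurableSet S) :
    P {ω | (A ω, V ω) ∈ S} = ∫⁻ v, P {ω | (A ω, v) ∈ S} ∂(P.map V) := by
  have h1 := (indepFun_iff_map_prod_eq_prod_map_map hA.aemeasurable hV.aemeasurable).1 hAV
  have := Measure.isProbabilityMeasure_map (μ := P) hA.aemeasurable
  have := Measure.isProbabilityMeasure_map (μ := P) hV.aemeasurable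
  have h2 : P {ω | (A ω, V ω) ∈ S} = P.map (fun ω => (A ω, V ω)) S :=
    (Measure.map_apply (hA.prodMk hV) hS).symm
  rw [h2, h1, Measure.prod_apply_symm hS]
  refine lintegral_congr fun v => ?_
  rw [Measure.map_apply hA (measurable_prodMk_right hS)]
  rfl

/-- The weighted average of the first `n` terms of `x`, as a function of `(x, (w, n))`. -/
def weightedAvg (p : (ℕ → ℝ) × ((ℕ → ℝ) × ℕ)) : ℝ :=
  (∑ i ∈ Finset.range p.2.2, p.2.1 i * p.1 i) / (∑ i ∈ Finset.range p.2.2, p.2.1 i)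

lemma measurableSet_weightedAvg_le (t : ℝ) : MeasurableSet {p | weightedAvg p ≤ t} := by
  have : {p | weightedAvg p ≤ t} = ⋃ n : ℕ, {p : (ℕ → ℝ) × ((ℕ → ℝ) × ℕ) | p.2.2 = n} ∩
      {p | (∑ i ∈ Finset.range n, p.2.1 i * p.1 i) / (∑ i ∈ Finset.range n, p.2.1 i) ≤ t} := by
    ext p
    simp [weightedAvg]
  rw [this]
  refine MeasurableSet.iUnion fun n => MeasurableSet.inter ?_ ?_
  · exact (measurable_snd.comp measurable_snd) (measurableSet_singleton n)
  · exact measurableSet_le (by fun_prop) measurable_const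

/-- the claim-average of a randomly counted, randomly weighted pool of WNAID
super-Pareto losses stochastically dominates a single loss on `{N ≥ 1}`, strictly so
whenever `P(N ≥ 2) > 0`. -/
theorem stmt_6 {Ω : Type} [MeasurableSpace Ω] (P : Measure Ω) [IsProbabilityMeasure P]
    (X : ℕ → Ω → ℝ) (X0 : Ω → ℝ) (W : ℕ → Ω → ℝ) (N : Ω → ℕ)
    (hXm : ∀ i, Measurable (X i)) (hX0m : Measurable X0)
    (hWm : ∀ i, Measurable (W i)) (hNm : Measurable N)
    (hSP : ∀ i, IsSuperPareto P (X i))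
    (hWNA : WeaklyNegAssocSeq P X)
    (hid : ∀ i j, Measure.map (X i) P = Measure.map (X j) P)
    (hX0d : Measure.map X0 P = Measure.map (X 0) P)
    (hWpos : ∀ i ω, 0 < W i ω)
    (hindep : iIndep
      (![MeasurableSpace.comap X0 inferInstance,
         MeasurableSpace.comap (fun ω => fun i => X i ω) inferInstance,
         MeasurableSpace.comap (fun ω => fun i => W i ω) inferInstance,
         MeasurableSpace.comap N inferInstance] : Fin 4 → MeasurableSpace Ω) P) :
    StochDom P (fun ω => if 1 ≤ N ω then X0 ω else 0)
      (fun ω => (∑ i ∈ Finset.range (N ω), W i ω * X i ω) /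
        (∑ i ∈ Finset.range (N ω), W i ω)) ∧
    (0 < P {ω | 2 ≤ N ω} →
      ∀ t : ℝ, essInfRV P X0 < t →
        P {ω | (∑ i ∈ Finset.range (N ω), W i ω * X i ω) /
            (∑ i ∈ Finset.range (N ω), W i ω) ≤ t}
          < P {ω | (if 1 ≤ N ω then X0 ω else 0) ≤ t}) := by
  set XS : Ω → ℕ → ℝ := fun ω i => X i ω with hXS
  set V : Ω → (ℕ → ℝ) × ℕ := fun ω => (fun i => W i ω, N ω) with hV
  have hXSm : Measurable XS := measurable_pi_lambda _ hXm
  have hWSm : Measurable (fun ω => fun i => W i ω) := measurable_pi_lambda _ hWm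
  have hVm : Measurable V := hWSm.prodMk hNm
  have hmle : ∀ k, (![MeasurableSpace.comap X0 inferInstance,
      MeasurableSpace.comap (fun ω => fun i => X i ω) inferInstance,
      MeasurableSpace.comap (fun ω => fun i => W i ω) inferInstance,
      MeasurableSpace.comap N inferInstance] : Fin 4 → MeasurableSpace Ω) k
        ≤ (inferInstance : MeasurableSpace Ω) := by
    intro k
    fin_cases k
    · exact hX0m.comap_le
    · exact hXSm.comap_le
    · exact hWSm.comap_le
    · exact hNm.comap_le
  have hVcomap : MeasurableSpace.comap V inferInstance
      ≤ ⨆ k ∈ ({2, 3} : Set (Fin 4)), (![MeasurableSpace.comap X0 inferInstance,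
      MeasurableSpace.comap (fun ω => fun i => X i ω) inferInstance,
      MeasurableSpace.comap (fun ω => fun i => W i ω) inferInstance,
      MeasurableSpace.comap N inferInstance] : Fin 4 → MeasurableSpace Ω) k := by
    rw [iSup_pair]
    exact (MeasurableSpace.comap_prodMk _ _).le
  have hXV : IndepFun XS V P := by
    have h1 := indep_iSup_of_disjoint hmle hindep
      (S := {1}) (T := {2, 3}) (by simp)
    rw [iSup_singleton] at h1
    exact indep_of_indep_of_le_right h1 hVcomap
  have hX0V : IndepFun X0 V P := by
    have h1 := indep_iSup_of_disjoint hmle hindep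
      (S := {0}) (T := {2, 3}) (by simp)
    rw [iSup_singleton] at h1
    exact indep_of_indep_of_le_right h1 hVcomap
  have hVprob := Measure.isProbabilityMeasure_map (μ := P) hVm.aemeasurable
  have hlaw : ∀ x, P {ω | X0 ω ≤ x} = P {ω | X 0 ω ≤ x} :=
    cdf_eq_of_map_eq hX0m (hXm 0) hX0d
  have hess : essInfRV P X0 = essInfRV P (X 0) := by
    simp only [essInfRV, hlaw]
  have hSm : ∀ t : ℝ, MeasurableSet {p : ℝ × ((ℕ → ℝ) × ℕ) |
      (if 1 ≤ p.2.2 then p.1 else 0) ≤ t} := fun t =>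
    measurableSet_le (Measurable.ite
      ((measurable_snd.comp measurable_snd) (measurableSet_Ici (a := 1)))
      measurable_fst measurable_const) measurable_const
  have hR : ∀ t, P {ω | (∑ i ∈ Finset.range (N ω), W i ω * X i ω) /
      (∑ i ∈ Finset.range (N ω), W i ω) ≤ t}
        = ∫⁻ v, P {ω | weightedAvg (XS ω, v) ≤ t} ∂(P.map V) := fun t =>
    measure_eq_lintegral_of_indepFun hXSm hVm hXV (measurableSet_weightedAvg_le t)
  have hL : ∀ t, P {ω | (if 1 ≤ N ω then X0 ω else 0) ≤ t}
        = ∫⁻ v, P {ω | (if 1 ≤ v.2 then X0 ω else 0) ≤ t} ∂(P.map V) := fun t =>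
    measure_eq_lintegral_of_indepFun hX0m hVm hX0V (hSm t)
  have hpos : ∀ᵐ v ∂(P.map V), ∀ i, 0 < v.1 i := by
    rw [ae_all_iff]
    intro i
    exact (ae_map_iff hVm.aemeasurable (measurableSet_lt measurable_const
      ((measurable_pi_apply i).comp measurable_fst))).2
      (Filter.Eventually.of_forall fun ω => hWpos i ω)
  have hle : ∀ t, ∀ᵐ v ∂(P.map V), P {ω | weightedAvg (XS ω, v) ≤ t}
      ≤ P {ω | (if 1 ≤ v.2 then X0 ω else 0) ≤ t} := by
    intro t
    filter_upwards [hpos] with v hv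
    by_cases hn : 1 ≤ v.2
    · simp only [if_pos hn]
      rw [hlaw]
      exact (weighted_average_dom hXm (hSP 0) hWNA hid v.1 hv v.2 hn t).1
    · have h0 : v.2 = 0 := by omega
      -- With no summands the average is `0 / 0 = 0`, which is also the value of the other variable.
      simp [weightedAvg, h0]
  refine ⟨fun t => ?_, fun hN t ht => ?_⟩
  · rw [hR, hL]
    exact lintegral_mono_ae (hle t)
  · have hfin : ∫⁻ v, P {ω | weightedAvg (XS ω, v) ≤ t} ∂(P.map V) ≠ ⊤ := by
      rw [← hR]
      exact measure_ne_top _ _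
    have hmeas : Measurable fun v : (ℕ → ℝ) × ℕ =>
        P {ω | (if 1 ≤ v.2 then X0 ω else 0) ≤ t} := by
      have := Measure.isProbabilityMeasure_map (μ := P) hX0m.aemeasurable
      have h1 := measurable_measure_prodMk_right (μ := P.map X0) (hSm t)
      convert h1 using 2 with v
      rw [Measure.map_apply hX0m (measurable_prodMk_right (hSm t))]
      rfl
    rw [hR, hL]
    refine lintegral_strict_mono_of_ae_le_of_ae_lt_on hmeas.aemeasurable hfin (hle t)
      (s := {v | 2 ≤ v.2}) ?_ ?_
    · have h2 : MeasurableSet {v : (ℕ → ℝ) × ℕ | 2 ≤ v.2} :=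
        measurable_snd (measurableSet_Ici (a := 2))
      rw [Measure.map_apply hVm h2]
      exact hN.ne'
    · filter_upwards [hpos] with v hv h2
      have hn : 1 ≤ v.2 := le_trans (by norm_num) h2
      simp only [if_pos hn]
      rw [hlaw]
      exact (weighted_average_dom hXm (hSP 0) hWNA hid v.1 hv v.2 hn t).2 h2 (hess ▸ ht)

end
end

section
/- Let X_1, X_2, … be weakly negatively associated and identically distributed super-Pareto random variables, X a random variable with the same distribution as X_1, W_1, W_2, … positive random variables, and N a random variable with values in {0, 1, 2, …}, such that X, the sequence (X_i)_{i≥1}, the sequence (W_i)_{i≥1}, and N are mutually independent. Then Σ_{i=1}^N W_i X ≤_st Σ_{i=1}^N W_i X_i, where both sums are 0 on the event {N = 0}. -/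
/-!
Fix the weights `w` and the number `n ≥ 1` of terms, and put `θ i = w i / ∑ w`. A super-Pareto law
is that of `f Y` with `Y` Pareto(1), so it lives on `[m, ∞)` with `m = f 1`. Hence if the weighted
average of the `X i` is at most `m + d`, then almost surely every single `X i` is at most
`m + d / θ i` (`average_le_subset`). Weak negative association, applied one coordinate at a
time, bounds the probability of that orthant by the product of the marginals
(`measure_orthant_le`).

Let `1 + s` be the largest `y` with `f y ≤ m + d`. Then `P (X ≤ m + d) = s / (s + 1)`, and
convexity of `f` gives `P (X ≤ m + d / θ) ≤ s / (s + θ)` (`superPareto_marginal`). The result for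
deterministic weights is therefore `∏ s / (s + θ i) ≤ s / (s + ∑ θ i)` (`prod_div_add_le`).

Random weights and a random number of terms are handled by Fubini: `(W, N)` is independent of the
`X i` and of `X0`, so both sides are mixtures over `(W, N)` of the deterministic case
(`measure_mem_eq_lintegral`).
-/

open MeasureTheory ProbabilityTheory Set

noncomputable section

/-! ### Marginal estimates -/

lemma prod_div_add_le_s7 (s : ℝ) (hs : 0 ≤ s) (θ : ℕ → ℝ) (hθ : ∀ i, 0 < θ i) (n : ℕ) :
    ∏ i ∈ Finset.range (n + 1), s / (s + θ i) ≤ s / (s + ∑ i ∈ Finset.range (n + 1), θ i) := by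
  induction n with
  | zero => simp
  | succ n ih =>
    rw [Finset.prod_range_succ, Finset.sum_range_succ]
    set b := ∑ i ∈ Finset.range (n + 1), θ i
    have hb : 0 < b := Finset.sum_pos (fun i _ => hθ i) (by simp)
    have ha := hθ (n + 1)
    set a := θ (n + 1)
    calc _ ≤ s / (s + b) * (s / (s + a)) := by gcongr
      _ ≤ s / (s + (b + a)) := by
        rw [div_mul_div_comm, div_le_div_iff₀ (by positivity) (by positivity)]
        nlinarith [mul_nonneg hs (mul_nonneg hb.le ha.le)]

/-- A monotone, convex, non-constant function has bounded sublevel sets, since it grows at least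
linearly beyond any increment. -/
lemma bddAbove_sublevel {f : ℝ → ℝ} (hf : Monotone f) (hc : ConvexOn ℝ Set.univ f)
    (hne : ∃ u v : ℝ, f u ≠ f v) (c : ℝ) : BddAbove {y : ℝ | f y ≤ c} := by
  obtain ⟨u, v, huv, hfuv⟩ : ∃ u v, u < v ∧ f u < f v := by
    obtain ⟨u, v, h⟩ := hne
    rcases lt_or_gt_of_ne h with h | h
    · exact ⟨u, v, hf.reflect_lt h, h⟩
    · exact ⟨v, u, hf.reflect_lt h, h⟩
  have hk : 0 < (f v - f u) / (v - u) := div_pos (by linarith) (by linarith)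
  refine ⟨max v (v + (c - f v) / ((f v - f u) / (v - u))), fun y hy => ?_⟩
  rcases le_or_gt y v with h | h
  · exact h.trans (le_max_left _ _)
  · refine le_trans ?_ (le_max_right _ _)
    have h1 := hc.slope_mono_adjacent (mem_univ u) (mem_univ y) huv h
    have h2 : y - v ≤ (c - f v) / ((f v - f u) / (v - u)) := by
      rw [le_div_iff₀ hk]
      rw [le_div_iff₀ (by linarith)] at h1
      have : f y ≤ c := hy
      linarith
    linarith

/-- The marginal estimates for a super-Pareto law, with `m` an almost sure lower bound:
here `1 + s` is the largest `y` at which the convex transform is at most `m + d`. -/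
lemma superPareto_marginal {Ω : Type} [MeasurableSpace Ω] {P : Measure Ω}
    {X : Ω → ℝ} (h : IsSuperPareto P X) :
    ∃ m : ℝ, Measure.map X P (Iio m) = 0 ∧ ∀ d : ℝ, 0 ≤ d → ∃ s : ℝ, 0 ≤ s ∧
      ENNReal.ofReal (s / (s + 1)) ≤ Measure.map X P (Iic (m + d)) ∧
      ∀ θ : ℝ, 0 < θ → θ ≤ 1 →
        Measure.map X P (Iic (m + d / θ)) ≤ ENNReal.ofReal (s / (s + θ)) := by
  obtain ⟨-, Ω', _, Q, Y, f, hQ, ⟨hYm, hY⟩, hf, hc, hne, hmap⟩ := h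
  have hcdf : ∀ s : ℝ, 0 ≤ s → ∀ θ : ℝ, 0 < θ →
      Q {ω | Y ω ≤ 1 + s / θ} = ENNReal.ofReal (s / (s + θ)) := by
    intro s hs θ hθ
    rw [← ENNReal.ofReal_toReal (measure_ne_top Q _), hY, if_pos (by linarith [div_nonneg hs hθ.le])]
    congr 1
    field_simp
    ring
  rw [hmap]
  have hm : Measurable (f ∘ Y) := hf.measurable.comp hYm
  refine ⟨f 1, ?_, fun d hd => ?_⟩
  · rw [Measure.map_apply hm measurableSet_Iio]
    refine measure_mono_null (t := {ω | Y ω ≤ 1 + 0 / 1}) (fun ω hω => ?_) ?_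
    · have : f (Y ω) < f 1 := hω
      simpa using (hf.reflect_lt this).le
    · rw [hcdf 0 le_rfl 1 one_pos]; simp
  · have hcl : IsClosed {y : ℝ | f y ≤ f 1 + d} :=
      isClosed_le (continuousOn_univ.mp (hc.continuousOn isOpen_univ)) continuous_const
    have hbdd := bddAbove_sublevel hf hc hne (f 1 + d)
    have hmem1 : (1 : ℝ) ∈ {y : ℝ | f y ≤ f 1 + d} := by simpa using hd
    have hmem := hcl.csSup_mem ⟨1, hmem1⟩ hbdd
    have h1 := le_csSup hbdd hmem1
    have hub : ∀ y, f y ≤ f 1 + d → y ≤ sSup {y : ℝ | f y ≤ f 1 + d} :=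
      fun y hy => le_csSup hbdd hy
    set z := sSup {y : ℝ | f y ≤ f 1 + d}
    refine ⟨z - 1, by linarith, ?_, fun θ hθ hθ1 => ?_⟩
    · rw [Measure.map_apply hm measurableSet_Iic, ← hcdf (z - 1) (by linarith) 1 one_pos]
      refine measure_mono fun ω hω => ?_
      have h2 : Y ω ≤ z := by
        have : Y ω ≤ 1 + (z - 1) / 1 := hω
        linarith
      exact (hf h2).trans hmem
    · rw [Measure.map_apply hm measurableSet_Iic, ← hcdf (z - 1) (by linarith) θ hθ]
      refine measure_mono fun ω hω => ?_
      have h2 : f (Y ω) ≤ f 1 + d / θ := hω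
      have h3 := hc.2 (mem_univ 1) (mem_univ (Y ω)) (sub_nonneg.2 hθ1) hθ.le (by ring)
      simp only [smul_eq_mul] at h3
      have h4 : θ * f (Y ω) ≤ θ * f 1 + d := by
        have := mul_le_mul_of_nonneg_left h2 hθ.le
        rwa [mul_add, mul_div_cancel₀ _ hθ.ne'] at this
      have h5 := hub _ (h3.trans (by linarith))
      change Y ω ≤ 1 + (z - 1) / θ
      rw [← sub_le_iff_le_add', le_div_iff₀ hθ]
      linarith

/-! ### Deterministic weights -/

/-- Weak negative association implies negative lower orthant dependence. -/
lemma measure_orthant_le {Ω : Type} [MeasurableSpace Ω] (P : Measure Ω) [IsProbabilityMeasure P]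
    (X : ℕ → Ω → ℝ) (hWNA : WeaklyNegAssocSeq P X) (a : ℕ → ℝ) (n : ℕ) :
    P {ω | ∀ i < n, X i ω ≤ a i} ≤ ∏ i ∈ Finset.range n, P {ω | X i ω ≤ a i} := by
  induction n with
  | zero => simp
  | succ n ih =>
    rw [Finset.prod_range_succ]
    have hn : n ∈ Finset.range (n + 1) := by simp
    have hS : MeasurableSet {z : {j : {x // x ∈ Finset.range (n + 1)} // j ≠ ⟨n, hn⟩} → ℝ |
        ∀ j, z j ≤ a j.1.1} := by
      rw [ofPred_forall]
      exact MeasurableSet.iInter fun j => measurableSet_le (measurable_pi_apply j) measurable_const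
    have key := hWNA (Finset.range (n + 1)) ⟨n, hn⟩ _ hS
      (fun x hx y hy j => (hy j).trans (hx j)) (a n)
    have hset : {ω | (fun j : {j : {x // x ∈ Finset.range (n + 1)} // j ≠ ⟨n, hn⟩} =>
        X j.1.1 ω) ∈ {z : {j : {x // x ∈ Finset.range (n + 1)} // j ≠ ⟨n, hn⟩} → ℝ |
        ∀ j, z j ≤ a j.1.1}} = {ω | ∀ i < n, X i ω ≤ a i} := by
      ext ω
      simp only [mem_ofPred_eq]
      constructor
      · intro h i hi
        exact h ⟨⟨i, by simp; omega⟩, by simp; omega⟩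
      · rintro h ⟨⟨i, hi⟩, hin⟩
        have h1 := Finset.mem_range.1 hi
        have h2 : i ≠ n := fun h => hin (Subtype.ext h)
        exact h i (by omega)
    rw [hset] at key
    refine le_trans (measure_mono fun ω hω => ?_) (key.trans (by gcongr))
    exact ⟨fun i hi => hω i (by omega), hω n (by omega)⟩

/-- If all `a i ≥ m`, a bound on the weighted sum bounds each summand. -/
lemma average_le_subset {w a : ℕ → ℝ} (hw : ∀ i, 0 < w i) {n : ℕ} {m x : ℝ}
    (ha : ∀ i < n, m ≤ a i) (h : ∑ i ∈ Finset.range n, w i * a i ≤ x) (i : ℕ) (hi : i < n) :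
    a i ≤ m + (x - (∑ j ∈ Finset.range n, w j) * m) / w i := by
  have h1 : w i * (a i - m) ≤ ∑ j ∈ Finset.range n, w j * (a j - m) :=
    Finset.single_le_sum (f := fun j => w j * (a j - m))
      (fun j hj => mul_nonneg (hw j).le (sub_nonneg.2 (ha j (Finset.mem_range.1 hj))))
      (Finset.mem_range.2 hi)
  have h2 : ∑ j ∈ Finset.range n, w j * (a j - m) =
      ∑ j ∈ Finset.range n, w j * a j - (∑ j ∈ Finset.range n, w j) * m := by
    simp only [mul_sub, Finset.sum_sub_distrib, Finset.sum_mul]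
  rw [← sub_le_iff_le_add', le_div_iff₀ (hw i)]
  linarith

/-- The case of deterministic weights and a deterministic number of terms. -/
lemma deterministic_dom {Ω : Type} [MeasurableSpace Ω] (P : Measure Ω) [IsProbabilityMeasure P]
    (X : ℕ → Ω → ℝ) (X0 : Ω → ℝ)
    (hXm : ∀ i, Measurable (X i)) (hX0m : Measurable X0)
    (hSP : ∀ i, IsSuperPareto P (X i)) (hWNA : WeaklyNegAssocSeq P X)
    (hid : ∀ i j, Measure.map (X i) P = Measure.map (X j) P)
    (hX0d : Measure.map X0 P = Measure.map (X 0) P)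
    (w : ℕ → ℝ) (hw : ∀ i, 0 < w i) (n : ℕ) (x : ℝ) :
    P {ω | ∑ i ∈ Finset.range n, w i * X i ω ≤ x} ≤
      P {ω | (∑ i ∈ Finset.range n, w i) * X0 ω ≤ x} := by
  rcases n with _ | n
  · simp
  obtain ⟨m, hm0, hmd⟩ := superPareto_marginal (hSP 0)
  have hX : ∀ i c, P {ω | X i ω ≤ c} = Measure.map (X 0) P (Iic c) := fun i c => by
    rw [← hid i 0, Measure.map_apply (hXm i) measurableSet_Iic]; rfl
  have hX0 : ∀ c, P {ω | X0 ω ≤ c} = Measure.map (X 0) P (Iic c) := fun c => by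
    rw [← hX0d, Measure.map_apply hX0m measurableSet_Iic]; rfl
  have hlow : ∀ᵐ ω ∂P, ∀ i, m ≤ X i ω := by
    refine ae_all_iff.2 fun i => ?_
    rw [← hid i 0, Measure.map_apply (hXm i) measurableSet_Iio] at hm0
    rw [ae_iff]
    simpa [preimage] using hm0
  have hT : 0 < ∑ i ∈ Finset.range (n + 1), w i := Finset.sum_pos (fun i _ => hw i) (by simp)
  have hwT : ∀ i ∈ Finset.range (n + 1), w i ≤ ∑ i ∈ Finset.range (n + 1), w i :=
    fun i hi => Finset.single_le_sum (fun j _ => (hw j).le) hi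
  have hsub : ∀ᵐ ω ∂P, ∑ i ∈ Finset.range (n + 1), w i * X i ω ≤ x → ∀ i < n + 1,
      X i ω ≤ m + (x - (∑ j ∈ Finset.range (n + 1), w j) * m) / w i := by
    filter_upwards [hlow] with ω hω h
    exact average_le_subset (a := fun i => X i ω) hw (fun i _ => hω i) h
  set T := ∑ i ∈ Finset.range (n + 1), w i with hTdef
  rcases lt_or_ge (x - T * m) 0 with hneg | hpos
  · refine le_trans (le_of_eq ?_) zero_le
    refine measure_eq_zero_iff_ae_notMem.2 ?_
    filter_upwards [hlow, hsub] with ω h1 h2 h3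
    have h4 := h2 h3 0 (by omega)
    have h5 : (x - T * m) / w 0 < 0 := div_neg_of_neg_of_pos hneg (hw 0)
    linarith [h1 0]
  · obtain ⟨s, hs, hs1, hs2⟩ := hmd ((x - T * m) / T) (by positivity)
    have hRHS : {ω | T * X0 ω ≤ x} = {ω | X0 ω ≤ m + (x - T * m) / T} := by
      ext ω
      simp only [mem_ofPred_eq]
      rw [← sub_le_iff_le_add', le_div_iff₀ hT]
      constructor <;> intro h <;> linarith
    rw [hRHS, hX0]
    calc P {ω | ∑ i ∈ Finset.range (n + 1), w i * X i ω ≤ x}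
        ≤ P {ω | ∀ i < n + 1, X i ω ≤ m + (x - T * m) / w i} := measure_mono_ae hsub
      _ ≤ ∏ i ∈ Finset.range (n + 1), P {ω | X i ω ≤ m + (x - T * m) / w i} :=
          measure_orthant_le P X hWNA (fun i => m + (x - T * m) / w i) (n + 1)
      _ ≤ ∏ i ∈ Finset.range (n + 1), ENNReal.ofReal (s / (s + w i / T)) := by
          refine Finset.prod_le_prod' fun i hi => ?_
          have := hs2 (w i / T) (div_pos (hw i) hT) ((div_le_one hT).2 (hwT i hi))
          rwa [div_div_div_cancel_right₀ hT.ne', ← hX i] at this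
      _ = ENNReal.ofReal (∏ i ∈ Finset.range (n + 1), s / (s + w i / T)) :=
          (ENNReal.ofReal_prod_of_nonneg fun i _ =>
            div_nonneg hs (add_nonneg hs (div_pos (hw i) hT).le)).symm
      _ ≤ ENNReal.ofReal (s / (s + 1)) := by
          refine ENNReal.ofReal_le_ofReal ?_
          have := prod_div_add_le_s7 s hs (fun i => w i / T) (fun i => div_pos (hw i) hT) n
          rwa [← Finset.sum_div, ← hTdef, div_self hT.ne'] at this
      _ ≤ _ := hs1

/-! ### Random weights -/

/-- Fubini for independent `V`, `A`: the law of `(V, A)` is obtained by freezing `V`. -/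
lemma measure_mem_eq_lintegral {Ω β γ : Type} [MeasurableSpace Ω] [MeasurableSpace β]
    [MeasurableSpace γ] (P : Measure Ω) [IsProbabilityMeasure P] {V : Ω → β} {A : Ω → γ}
    (hV : Measurable V) (hA : Measurable A) (h : IndepFun V A P) {T : Set (β × γ)}
    (hT : MeasurableSet T) :
    P {ω | (V ω, A ω) ∈ T} = ∫⁻ ω', P {ω | (V ω', A ω) ∈ T} ∂P := by
  have : IsProbabilityMeasure (P.map A) := Measure.isProbabilityMeasure_map hA.aemeasurable
  have h1 : P {ω | (V ω, A ω) ∈ T} = P.map (fun ω => (V ω, A ω)) T :=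
    (Measure.map_apply (hV.prodMk hA) hT).symm
  rw [h1, (indepFun_iff_map_prod_eq_prod_map_map hV.aemeasurable hA.aemeasurable).1 h,
    Measure.prod_apply hT, lintegral_map (measurable_measure_prodMk_left hT) hV]
  refine lintegral_congr fun ω' => ?_
  rw [Measure.map_apply hA (measurable_prodMk_left hT)]
  rfl

/-- the randomly weighted sum of identical copies of a single loss is
stochastically dominated by the randomly weighted sum of WNAID super-Pareto losses. -/
theorem stmt_7 {Ω : Type} [MeasurableSpace Ω] (P : Measure Ω) [IsProbabilityMeasure P]
    (X : ℕ → Ω → ℝ) (X0 : Ω → ℝ) (W : ℕ → Ω → ℝ) (N : Ω → ℕ)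
    (hXm : ∀ i, Measurable (X i)) (hX0m : Measurable X0)
    (hWm : ∀ i, Measurable (W i)) (hNm : Measurable N)
    (hSP : ∀ i, IsSuperPareto P (X i))
    (hWNA : WeaklyNegAssocSeq P X)
    (hid : ∀ i j, Measure.map (X i) P = Measure.map (X j) P)
    (hX0d : Measure.map X0 P = Measure.map (X 0) P)
    (hWpos : ∀ i ω, 0 < W i ω)
    (hindep : iIndep
      (![MeasurableSpace.comap X0 inferInstance,
         MeasurableSpace.comap (fun ω => fun i => X i ω) inferInstance,
         MeasurableSpace.comap (fun ω => fun i => W i ω) inferInstance,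
         MeasurableSpace.comap N inferInstance] : Fin 4 → MeasurableSpace Ω) P) :
    StochDom P (fun ω => (∑ i ∈ Finset.range (N ω), W i ω) * X0 ω)
      (fun ω => ∑ i ∈ Finset.range (N ω), W i ω * X i ω) := by
  intro x
  have hXs : Measurable fun ω => fun i => X i ω := measurable_pi_lambda _ hXm
  have hWs : Measurable fun ω => fun i => W i ω := measurable_pi_lambda _ hWm
  have hV : Measurable fun ω => ((fun i => W i ω), N ω) := hWs.prodMk hNm
  -- `(W, N)` generates the join of the last two σ-algebras, which is independent of each of the
  -- first two.
  have hVind : ∀ k : Fin 4, k ∉ ({2, 3} : Set (Fin 4)) →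
      Indep (MeasurableSpace.comap (fun ω => ((fun i => W i ω), N ω)) inferInstance)
        ((![MeasurableSpace.comap X0 inferInstance,
         MeasurableSpace.comap (fun ω => fun i => X i ω) inferInstance,
         MeasurableSpace.comap (fun ω => fun i => W i ω) inferInstance,
         MeasurableSpace.comap N inferInstance] : Fin 4 → MeasurableSpace Ω) k) P := by
    intro k hk
    have hle : ∀ i, (![MeasurableSpace.comap X0 inferInstance,
         MeasurableSpace.comap (fun ω => fun i => X i ω) inferInstance,
         MeasurableSpace.comap (fun ω => fun i => W i ω) inferInstance,
         MeasurableSpace.comap N inferInstance] : Fin 4 → MeasurableSpace Ω) i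
         ≤ ‹MeasurableSpace Ω› := by
      intro i
      fin_cases i
      · exact hX0m.comap_le
      · exact hXs.comap_le
      · exact hWs.comap_le
      · exact hNm.comap_le
    have h := indep_iSup_of_disjoint hle hindep (S := {2, 3}) (T := {k})
      (Set.disjoint_singleton_right.2 hk)
    rw [iSup_pair, iSup_singleton] at h
    convert h using 1
    exact MeasurableSpace.comap_prodMk _ _
  have hi0 : IndepFun (fun ω => ((fun i => W i ω), N ω)) X0 P := hVind 0 (by simp)
  have hi1 : IndepFun (fun ω => ((fun i => W i ω), N ω)) (fun ω => fun i => X i ω) P :=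
    hVind 1 (by simp)
  have hT1 : MeasurableSet {p : ((ℕ → ℝ) × ℕ) × (ℕ → ℝ) |
      ∑ i ∈ Finset.range p.1.2, p.1.1 i * p.2 i ≤ x} := by
    have : {p : ((ℕ → ℝ) × ℕ) × (ℕ → ℝ) | ∑ i ∈ Finset.range p.1.2, p.1.1 i * p.2 i ≤ x} =
        ⋃ n, {p | p.1.2 = n} ∩ {p | ∑ i ∈ Finset.range n, p.1.1 i * p.2 i ≤ x} := by
      ext p; simp
    rw [this]
    refine MeasurableSet.iUnion fun n => MeasurableSet.inter ?_ ?_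
    · exact (measurable_snd.comp measurable_fst) (measurableSet_singleton n)
    · exact measurableSet_le (by fun_prop) measurable_const
  have hT0 : MeasurableSet {p : ((ℕ → ℝ) × ℕ) × ℝ |
      (∑ i ∈ Finset.range p.1.2, p.1.1 i) * p.2 ≤ x} := by
    have : {p : ((ℕ → ℝ) × ℕ) × ℝ | (∑ i ∈ Finset.range p.1.2, p.1.1 i) * p.2 ≤ x} =
        ⋃ n, {p | p.1.2 = n} ∩ {p | (∑ i ∈ Finset.range n, p.1.1 i) * p.2 ≤ x} := by
      ext p; simp
    rw [this]
    refine MeasurableSet.iUnion fun n => MeasurableSet.inter ?_ ?_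
    · exact (measurable_snd.comp measurable_fst) (measurableSet_singleton n)
    · exact measurableSet_le (by fun_prop) measurable_const
  have e1 := measure_mem_eq_lintegral P hV hXs hi1 hT1
  have e0 := measure_mem_eq_lintegral P hV hX0m hi0 hT0
  simp only [mem_ofPred_eq] at e0 e1
  rw [e0, e1]
  exact lintegral_mono fun ω' => deterministic_dom P X X0 hXm hX0m hSP hWNA hid hX0d
    (fun i => W i ω') (fun i => hWpos i ω') (N ω') x

end
end

section
/- In the super-Pareto risk sharing market, suppose ρ_1, …, ρ_n are mildly monotone distortion risk measures that are real-valued on all portfolio losses arising in the market, and let X be a random variable with the same distribution as X_1. If p ≥ 0 satisfies c_{i+}'(0) ≥ p − ρ_i(X) ≥ c_{i−}'(0) for every i ∈ {1, …, n}, where c_{i+}' and c_{i−}' denote the right and left derivatives of c_i, then the tuple ((p, …, p), a^1, …, a^n) is an equilibrium. -/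
/-!
Keeping the initial exposure is optimal because diversification of weakly negatively associated
super-Pareto losses is harmful: for `w ≥ 0` with total `s = ∑ w_j > 0`, the portfolio `∑ w_j X_j`
dominates `s X_k` in first-order stochastic dominance (`stochDom_portfolio`).

The dominance is proved as follows. Let `X = f(Y)` in law with `Y ~ Pareto(1)` and `m = f 1`, so
that `X_j ≥ m` almost surely. If `∑ θ_j X_j ≤ x` with `θ` in the simplex, then every `X_i` with
`θ_i > 0` is at most `m + (x - m) / θ_i`. Weak negative association bounds the probability of this
lower orthant by the product of its marginals (`lowerOrthant_le`). If `t` is the largest point with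
`f t ≤ x`, convexity of `f` gives `P(X ≤ m + (x - m) / θ) ≤ (t - 1) / (t - 1 + θ)`
(`superPareto_tail`), and the product of these factors is at most
`(t - 1) / (t - 1 + ∑ θ_i) = 1 - 1 / t = P(X ≤ x)` (`prod_ratio_le`).

A distortion risk measure is translation equivariant and positively homogeneous, so weak
monotonicity yields `ρ_i(L_i(w)) ≥ s ρ_i(X) - (s - a_i) p`, with equality at the initial
exposure. The remaining inequality `c_i(d) ≥ d (p - ρ_i(X))` for `d = s - a_i` says that
`p - ρ_i(X)` is a subgradient of `c_i` at `0`.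
-/

open MeasureTheory ProbabilityTheory Set

noncomputable section

/-! ### Distortion risk measures -/

/-- The two integrals defining a distortion risk measure merge into a single integral over `ℝ`,
on which translation and scaling act by change of variables. -/
lemma distortionRM_eq_integral {Ω : Type} [MeasurableSpace Ω] {P : Measure Ω} {h : ℝ → ℝ}
    {Y : Ω → ℝ}
    (h1 : IntegrableOn (fun x => h ((P {ω | x < Y ω}).toReal) - 1) (Set.Iic (0 : ℝ)))
    (h2 : IntegrableOn (fun x => h ((P {ω | x < Y ω}).toReal)) (Set.Ioi (0 : ℝ))) :
    Integrable (fun x => h ((P {ω | x < Y ω}).toReal) - (Iic (0 : ℝ)).indicator 1 x) ∧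
    distortionRM P h Y =
      ∫ x, (h ((P {ω | x < Y ω}).toReal) - (Iic (0 : ℝ)).indicator 1 x) := by
  set φ : ℝ → ℝ := fun x => h ((P {ω | x < Y ω}).toReal) - (Iic (0 : ℝ)).indicator 1 x with hφ
  have e1 : EqOn (fun x => h ((P {ω | x < Y ω}).toReal) - 1) φ (Iic 0) := by
    intro x hx
    simp only [hφ, indicator_of_mem hx, Pi.one_apply]
  have e2 : EqOn (fun x => h ((P {ω | x < Y ω}).toReal)) φ (Ioi 0) := by
    intro x hx
    have hx' : x ∉ Iic (0 : ℝ) := by simpa using hx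
    simp only [hφ, indicator_of_notMem hx', sub_zero]
  have i1 : IntegrableOn φ (Iic 0) := h1.congr_fun e1 measurableSet_Iic
  have i2 : IntegrableOn φ (Ioi 0) := h2.congr_fun e2 measurableSet_Ioi
  refine ⟨?_, ?_⟩
  · rw [← integrableOn_univ, ← Iic_union_Ioi (a := (0 : ℝ))]
    exact i1.union i2
  · rw [← intervalIntegral.integral_Iic_add_Ioi i1 i2, distortionRM,
      setIntegral_congr_fun measurableSet_Iic e1, setIntegral_congr_fun measurableSet_Ioi e2]

lemma integral_indicator_shift (b : ℝ) :
    Integrable (fun x : ℝ => (Iic (0 : ℝ)).indicator (1 : ℝ → ℝ) (x - b)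
      - (Iic (0 : ℝ)).indicator 1 x) ∧
    ∫ x : ℝ, ((Iic (0 : ℝ)).indicator (1 : ℝ → ℝ) (x - b) - (Iic (0 : ℝ)).indicator 1 x) = b := by
  rcases le_total 0 b with hb | hb
  · have e : (fun x : ℝ => (Iic (0 : ℝ)).indicator (1 : ℝ → ℝ) (x - b)
      - (Iic (0 : ℝ)).indicator 1 x) = (Ioc 0 b).indicator 1 := by
      ext x
      simp only [indicator_apply, mem_Iic, mem_Ioc, Pi.one_apply, sub_nonpos]
      split_ifs <;> grind
    rw [e]
    refine ⟨(integrable_indicator_iff measurableSet_Ioc).2 (integrableOn_const (by simp)), ?_⟩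
    rw [integral_indicator_one measurableSet_Ioc]
    simp [hb]
  · have e : (fun x : ℝ => (Iic (0 : ℝ)).indicator (1 : ℝ → ℝ) (x - b)
      - (Iic (0 : ℝ)).indicator 1 x) = fun x => - (Ioc b 0).indicator 1 x := by
      ext x
      simp only [indicator_apply, mem_Iic, mem_Ioc, Pi.one_apply, sub_nonpos]
      split_ifs <;> grind
    rw [e]
    refine ⟨((integrable_indicator_iff measurableSet_Ioc).2 (integrableOn_const (by simp))).neg, ?_⟩
    rw [integral_neg, integral_indicator_one measurableSet_Ioc]
    simp [hb]

lemma distortionRM_add_const {Ω : Type} [MeasurableSpace Ω] {P : Measure Ω} {h : ℝ → ℝ}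
    {Y : Ω → ℝ} {b : ℝ}
    (h1 : IntegrableOn (fun x => h ((P {ω | x < Y ω}).toReal) - 1) (Set.Iic (0 : ℝ)))
    (h2 : IntegrableOn (fun x => h ((P {ω | x < Y ω}).toReal)) (Set.Ioi (0 : ℝ)))
    (h1' : IntegrableOn (fun x => h ((P {ω | x < Y ω + b}).toReal) - 1) (Set.Iic (0 : ℝ)))
    (h2' : IntegrableOn (fun x => h ((P {ω | x < Y ω + b}).toReal)) (Set.Ioi (0 : ℝ))) :
    distortionRM P h (fun ω => Y ω + b) = distortionRM P h Y + b := by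
  obtain ⟨i, e⟩ := distortionRM_eq_integral h1 h2
  obtain ⟨-, e'⟩ := distortionRM_eq_integral (Y := fun ω => Y ω + b) h1' h2'
  obtain ⟨ib, eb⟩ := integral_indicator_shift b
  have key : (fun x => h ((P {ω | x < Y ω + b}).toReal) - (Iic (0 : ℝ)).indicator 1 x) =
      fun x => (fun x => h ((P {ω | x < Y ω}).toReal) - (Iic (0 : ℝ)).indicator 1 x) (x - b)
        + ((Iic (0 : ℝ)).indicator (1 : ℝ → ℝ) (x - b) - (Iic (0 : ℝ)).indicator 1 x) := by
    ext x
    simp only [sub_lt_iff_lt_add]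
    ring
  rw [e', e, key, integral_add (i.comp_sub_right b) ib, eb, integral_sub_right_eq_self
    (fun x => h ((P {ω | x < Y ω}).toReal) - (Iic (0 : ℝ)).indicator 1 x) b]

lemma distortionRM_const_mul {Ω : Type} [MeasurableSpace Ω] {P : Measure Ω} {h : ℝ → ℝ}
    {Y : Ω → ℝ} {s : ℝ} (hs : 0 < s)
    (h1 : IntegrableOn (fun x => h ((P {ω | x < Y ω}).toReal) - 1) (Set.Iic (0 : ℝ)))
    (h2 : IntegrableOn (fun x => h ((P {ω | x < Y ω}).toReal)) (Set.Ioi (0 : ℝ)))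
    (h1' : IntegrableOn (fun x => h ((P {ω | x < s * Y ω}).toReal) - 1) (Set.Iic (0 : ℝ)))
    (h2' : IntegrableOn (fun x => h ((P {ω | x < s * Y ω}).toReal)) (Set.Ioi (0 : ℝ))) :
    distortionRM P h (fun ω => s * Y ω) = s * distortionRM P h Y := by
  obtain ⟨-, e⟩ := distortionRM_eq_integral h1 h2
  obtain ⟨-, e'⟩ := distortionRM_eq_integral (Y := fun ω => s * Y ω) h1' h2'
  have key : (fun x => h ((P {ω | x < s * Y ω}).toReal) - (Iic (0 : ℝ)).indicator 1 x) =
      fun x => (fun x => h ((P {ω | x < Y ω}).toReal) - (Iic (0 : ℝ)).indicator 1 x) (s⁻¹ * x) := by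
    ext x
    have hx : s⁻¹ * x ≤ 0 ↔ x ≤ 0 := by
      rw [inv_mul_le_iff₀ hs, mul_zero]
    simp only [inv_mul_lt_iff₀ hs, indicator_apply, mem_Iic, hx, Pi.one_apply]
  rw [e', e, key, Measure.integral_comp_mul_left
    (fun x => h ((P {ω | x < Y ω}).toReal) - (Iic (0 : ℝ)).indicator 1 x) s⁻¹]
  simp [abs_of_pos hs]

lemma distortionRM_zero {Ω : Type} [MeasurableSpace Ω] (P : Measure Ω) [IsProbabilityMeasure P]
    {h : ℝ → ℝ} (h0 : h 0 = 0) (h1 : h 1 = 1) : distortionRM P h (fun _ => (0 : ℝ)) = 0 := by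
  have e1 : ∫ x in Iic (0 : ℝ), (h ((P {_ω : Ω | x < 0}).toReal) - 1) = 0 := by
    -- the integrand is `-1` at the endpoint `0`, a null set
    rw [integral_Iic_eq_integral_Iio]
    refine setIntegral_eq_zero_of_forall_eq_zero fun x hx => ?_
    have hx' : x < 0 := hx
    simp [hx', h1]
  have e2 : ∫ x in Ioi (0 : ℝ), h ((P {_ω : Ω | x < 0}).toReal) = 0 := by
    refine setIntegral_eq_zero_of_forall_eq_zero fun x hx => ?_
    have hx' : ¬ x < 0 := not_lt.2 (le_of_lt hx)
    simp [hx', h0]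
  rw [distortionRM, e1, e2, add_zero]

lemma distortionRM_congr_law {Ω : Type} [MeasurableSpace Ω] {P : Measure Ω} {h : ℝ → ℝ}
    {U V : Ω → ℝ} (hU : Measurable U) (hV : Measurable V)
    (hUV : Measure.map U P = Measure.map V P) : distortionRM P h U = distortionRM P h V := by
  have e : ∀ x : ℝ, P {ω | x < U ω} = P {ω | x < V ω} := by
    intro x
    have := congrArg (fun μ => μ (Ioi x)) hUV
    simp only [Measure.map_apply hU measurableSet_Ioi,
      Measure.map_apply hV measurableSet_Ioi] at this
    exact this
  simp only [distortionRM, e]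

/-! ### Stochastic dominance of portfolios -/

lemma lowerOrthant_le {Ω : Type} [MeasurableSpace Ω] {P : Measure Ω} [IsProbabilityMeasure P]
    {n : ℕ} {X : Fin n → Ω → ℝ} (hWNA : WeaklyNegAssoc P X) (y : Fin n → ℝ)
    (s : Finset (Fin n)) :
    P {ω | ∀ j ∈ s, X j ω ≤ y j} ≤ ∏ j ∈ s, P {ω | X j ω ≤ y j} := by
  induction s using Finset.induction_on with
  | empty => simp
  | insert i s hi ih =>
    have hm : MeasurableSet {z : {j : Fin n // j ≠ i} → ℝ | ∀ j, j.1 ∈ s → z j ≤ y j.1} := by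
      simp only [ofPred_forall]
      exact MeasurableSet.iInter fun j => MeasurableSet.iInter fun _ =>
        measurableSet_le (measurable_pi_apply j) measurable_const
    have hd : DecreasingSet {z : {j : Fin n // j ≠ i} → ℝ | ∀ j, j.1 ∈ s → z j ≤ y j.1} :=
      fun x hx z hz j hj => (hz j).trans (hx j hj)
    have key := hWNA i _ hm hd (y i)
    have e : {ω | (fun j : {j : Fin n // j ≠ i} => X j.1 ω) ∈
        {z : {j : Fin n // j ≠ i} → ℝ | ∀ j, j.1 ∈ s → z j ≤ y j.1}} =
        {ω | ∀ j ∈ s, X j ω ≤ y j} := by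
      ext ω
      simp only [mem_ofPred_eq]
      constructor
      · intro H j hj
        exact H ⟨j, fun hji => hi (hji ▸ hj)⟩ hj
      · intro H j hj
        exact H j.1 hj
    rw [e] at key
    have e2 : {ω | ∀ j ∈ insert i s, X j ω ≤ y j} =
        {ω | ∀ j ∈ s, X j ω ≤ y j} ∩ {ω | X i ω ≤ y i} := by
      ext ω
      simp only [Finset.forall_mem_insert, mem_ofPred_eq, mem_inter_iff]
      exact and_comm
    rw [e2, Finset.prod_insert hi, mul_comm]
    exact key.trans (by gcongr)

lemma prod_ratio_le {ι : Type*} (s : Finset ι) (θ : ι → ℝ) (hθ : ∀ i ∈ s, 0 < θ i)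
    (hs : s.Nonempty) {r : ℝ} (hr : 0 ≤ r) :
    ∏ i ∈ s, r / (r + θ i) ≤ r / (r + ∑ i ∈ s, θ i) := by
  induction hs using Finset.Nonempty.cons_induction with
  | singleton a => simp
  | cons a s ha hs ih =>
    rw [Finset.prod_cons, Finset.sum_cons]
    have h1 : 0 < θ a := hθ a (Finset.mem_cons_self a s)
    have h2 : ∀ i ∈ s, 0 < θ i := fun i hi => hθ i (Finset.mem_cons_of_mem hi)
    have h3 : 0 < ∑ i ∈ s, θ i := Finset.sum_pos h2 hs
    calc r / (r + θ a) * ∏ i ∈ s, r / (r + θ i)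
        ≤ r / (r + θ a) * (r / (r + ∑ i ∈ s, θ i)) :=
          mul_le_mul_of_nonneg_left (ih h2) (by positivity)
      _ ≤ r / (r + (θ a + ∑ i ∈ s, θ i)) := by
          rw [div_mul_div_comm, div_le_div_iff₀ (by positivity) (by positivity)]
          nlinarith [mul_nonneg hr (mul_pos h1 h3).le]

/-- A nonempty sublevel set of a nonconstant increasing convex function on `ℝ` is a half-line. -/
lemma exists_sublevel_eq_Iic {f : ℝ → ℝ} (hf : Monotone f) (hc : ConvexOn ℝ univ f)
    (hne : ∃ u v : ℝ, f u ≠ f v) {y0 x : ℝ} (hx : f y0 ≤ x) :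
    ∃ t, y0 ≤ t ∧ ∀ y, f y ≤ x ↔ y ≤ t := by
  obtain ⟨u, v, huv, hfuv⟩ : ∃ u v, u < v ∧ f u < f v := by
    obtain ⟨u, v, h⟩ := hne
    rcases lt_or_gt_of_ne h with h | h
    · exact ⟨u, v, hf.reflect_lt h, h⟩
    · exact ⟨v, u, hf.reflect_lt h, h⟩
  have hbdd : BddAbove {y | f y ≤ x} := by
    -- beyond `v`, the graph of `f` lies above the chord through `u` and `v`
    refine ⟨max v (v + (x - f v) * (v - u) / (f v - f u)), fun y hy => ?_⟩
    by_contra hcon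
    push Not at hcon
    obtain ⟨h1, h2⟩ := max_lt_iff.1 hcon
    have h3 := hc.slope_mono_adjacent (mem_univ u) (mem_univ y) huv h1
    rw [div_le_div_iff₀ (by linarith) (by linarith)] at h3
    have h4 : (x - f v) * (v - u) < (y - v) * (f v - f u) := by
      rw [← div_lt_iff₀ (by linarith)]
      linarith
    have hy' : f y ≤ x := hy
    nlinarith [mul_le_mul_of_nonneg_right (sub_le_sub_right hy' (f v)) (sub_pos.2 huv).le]
  have hcont : Continuous f := hc.locallyLipschitz.continuous
  have hcl : IsClosed {y | f y ≤ x} := isClosed_le hcont continuous_const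
  have hmem := hcl.csSup_mem ⟨y0, hx⟩ hbdd
  exact ⟨sSup {y | f y ≤ x}, le_csSup hbdd hx, fun y => ⟨fun hy => le_csSup hbdd hy,
    fun hy => (hf hy).trans hmem⟩⟩

/-- The marginal facts on a super-Pareto law used for dominance. The almost sure
lower bound `m` is `f 1`, and `r = t - 1` for the largest `t` with `f t ≤ x`. The last bound compares
`P(X ≤ m + (x - m) / θ)` with `P(X ≤ x)` using convexity of `f` on the segment from `1`. -/
lemma superPareto_tail {Ω : Type} [MeasurableSpace Ω] {P : Measure Ω} {X : Ω → ℝ}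
    (hX : IsSuperPareto P X) :
    ∃ m : ℝ, (∀ᵐ ω ∂P, m ≤ X ω) ∧ ∀ x, m ≤ x → ∃ r : ℝ, 0 ≤ r ∧
      (P {ω | X ω ≤ x}).toReal = r / (r + 1) ∧
      ∀ θ, 0 < θ → θ ≤ 1 → (P {ω | X ω ≤ m + (x - m) / θ}).toReal ≤ r / (r + θ) := by
  obtain ⟨hXm, Ω', _, Q, Y, f, hQ, ⟨hYm, hY⟩, hf, hc, hne, hlaw⟩ := hX
  have hfm : Measurable f := hf.measurable
  have hset : ∀ S : Set ℝ, MeasurableSet S → P {ω | X ω ∈ S} = Q {ω | f (Y ω) ∈ S} := by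
    intro S hS
    have := congrArg (fun μ => μ S) hlaw
    simp only [Measure.map_apply hXm hS, Measure.map_apply (hfm.comp hYm) hS] at this
    exact this
  have hY1 : ∀ᵐ ω ∂Q, 1 ≤ Y ω := by
    have h0 : (Q {ω | Y ω ≤ 1}).toReal = 0 := by rw [hY]; norm_num
    have h0' : Q {ω | Y ω ≤ 1} = 0 := by
      rcases (ENNReal.toReal_eq_zero_iff _).1 h0 with h | h
      · exact h
      · exact absurd h (measure_ne_top _ _)
    rw [ae_iff]
    refine measure_mono_null (fun ω hω => ?_) h0'
    exact (not_le.1 hω).le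
  refine ⟨f 1, ?_, ?_⟩
  · rw [ae_iff]
    have := hset (Iio (f 1)) measurableSet_Iio
    simp only [mem_Iio] at this
    simp only [not_le]
    rw [this]
    rw [ae_iff] at hY1
    refine measure_mono_null (fun ω hω => ?_) hY1
    exact not_le.2 (hf.reflect_lt hω)
  · intro x hx
    obtain ⟨t, ht1, ht⟩ := exists_sublevel_eq_Iic hf hc hne hx
    refine ⟨t - 1, by linarith, ?_, ?_⟩
    · have := hset (Iic x) measurableSet_Iic
      simp only [mem_Iic] at this
      rw [this]
      simp only [ht]
      rw [hY, if_pos ht1]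
      have : t ≠ 0 := by linarith
      rw [sub_add_cancel]
      field_simp
    · intro θ hθ hθ1
      have := hset (Iic (f 1 + (x - f 1) / θ)) measurableSet_Iic
      simp only [mem_Iic] at this
      rw [this]
      have hsub : {ω | f (Y ω) ≤ f 1 + (x - f 1) / θ} ⊆ {ω | Y ω ≤ 1 + (t - 1) / θ} := by
        intro ω hω
        have hω' : f (Y ω) ≤ f 1 + (x - f 1) / θ := hω
        have h1 := hc.2 (mem_univ (1 : ℝ)) (mem_univ (Y ω)) (sub_nonneg.2 hθ1) hθ.le
          (sub_add_cancel 1 θ)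
        simp only [smul_eq_mul, mul_one] at h1
        have h2 : θ * f (Y ω) ≤ θ * f 1 + (x - f 1) := by
          calc θ * f (Y ω) ≤ θ * (f 1 + (x - f 1) / θ) := by gcongr
            _ = _ := by field_simp
        have h3 : 1 - θ + θ * Y ω ≤ t := (ht _).1 (by linarith)
        show Y ω ≤ 1 + (t - 1) / θ
        rw [← sub_le_iff_le_add', le_div_iff₀ hθ]
        linarith
      calc (Q {ω | f (Y ω) ≤ f 1 + (x - f 1) / θ}).toReal
          ≤ (Q {ω | Y ω ≤ 1 + (t - 1) / θ}).toReal :=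
            ENNReal.toReal_mono (measure_ne_top _ _) (measure_mono hsub)
        _ = (t - 1) / (t - 1 + θ) := by
            have h0 : 0 ≤ (t - 1) / θ := div_nonneg (by linarith) hθ.le
            rw [hY, if_pos (by linarith)]
            have h1 : t - 1 + θ ≠ 0 := by linarith
            have h2 : θ + (t - 1) ≠ 0 := by linarith
            field_simp
            ring

/-- Concentrating a portfolio of weakly negatively associated, identically distributed super-Pareto
losses on a single one of them makes it stochastically smaller. -/
lemma stochDom_portfolio {Ω : Type} [MeasurableSpace Ω] {P : Measure Ω} [IsProbabilityMeasure P]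
    {n : ℕ} {X : Fin n → Ω → ℝ} (hSP : ∀ i, IsSuperPareto P (X i)) (hWNA : WeaklyNegAssoc P X)
    (hid : ∀ i j, Measure.map (X i) P = Measure.map (X j) P) (k : Fin n)
    {w : Fin n → ℝ} (hw : ∀ j, 0 ≤ w j) (hs : 0 < ∑ j, w j) :
    StochDom P (fun ω => (∑ j, w j) * X k ω) (fun ω => ∑ j, w j * X j ω) := by
  intro z
  obtain ⟨m, hm, htail⟩ := superPareto_tail (hSP k)
  have hcdf : ∀ j x, P {ω | X j ω ≤ x} = P {ω | X k ω ≤ x} := by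
    intro j x
    have := congrArg (fun μ => μ (Iic x)) (hid j k)
    simp only [Measure.map_apply (hSP j).1 measurableSet_Iic,
      Measure.map_apply (hSP k).1 measurableSet_Iic] at this
    exact this
  have hmall : ∀ᵐ ω ∂P, ∀ j, m ≤ X j ω := by
    rw [ae_all_iff]
    intro j
    have := congrArg (fun μ => μ (Iio m)) (hid j k)
    simp only [Measure.map_apply (hSP j).1 measurableSet_Iio,
      Measure.map_apply (hSP k).1 measurableSet_Iio] at this
    rw [ae_iff] at hm ⊢
    simp only [not_le] at hm ⊢
    exact this.trans hm
  set s := ∑ j, w j with hsdef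
  set x := z / s with hxdef
  have hz : z = s * x := by rw [hxdef]; field_simp
  have hR : {ω | s * X k ω ≤ z} = {ω | X k ω ≤ x} := by
    ext ω
    simp only [mem_ofPred_eq, hz]
    exact mul_le_mul_iff_right₀ hs
  rw [hR]
  rcases lt_or_ge x m with hxm | hxm
  · have h0 : P {ω | ∑ j, w j * X j ω ≤ z} = 0 := by
      have : ∀ᵐ ω ∂P, ¬ (∑ j, w j * X j ω ≤ z) := by
        filter_upwards [hmall] with ω hω
        rw [not_le]
        calc z = s * x := hz
          _ < s * m := mul_lt_mul_of_pos_left hxm hs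
          _ = ∑ j, w j * m := by rw [hsdef, Finset.sum_mul]
          _ ≤ _ := Finset.sum_le_sum fun j _ => mul_le_mul_of_nonneg_left (hω j) (hw j)
      simpa only [ae_iff, not_not] using this
    rw [h0]
    exact zero_le
  obtain ⟨r, hr, hFx, hFθ⟩ := htail x hxm
  set T : Finset (Fin n) := Finset.univ.filter fun j => 0 < w j with hT
  have hwT : ∀ j ∈ T, 0 < w j := fun j hj => (Finset.mem_filter.1 hj).2
  have hsT : ∑ j ∈ T, w j = s := by
    rw [hsdef]
    refine Finset.sum_subset (Finset.subset_univ _) fun j _ hj => ?_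
    have : ¬ 0 < w j := fun h => hj (Finset.mem_filter.2 ⟨Finset.mem_univ _, h⟩)
    exact le_antisymm (not_lt.1 this) (hw j)
  have hTne : T.Nonempty := by
    by_contra hcon
    rw [Finset.not_nonempty_iff_eq_empty] at hcon
    rw [hcon, Finset.sum_empty] at hsT
    exact hs.ne hsT
  have hθ1 : ∑ j ∈ T, w j / s = 1 := by
    rw [← Finset.sum_div, hsT, div_self hs.ne']
  have step1 : P {ω | ∑ j, w j * X j ω ≤ z} ≤
      P {ω | ∀ j ∈ T, X j ω ≤ m + (x - m) / (w j / s)} := by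
    refine measure_mono_ae ?_
    filter_upwards [hmall] with ω hω hle j hj
    have hle' : ∑ j, w j * X j ω ≤ z := hle
    show X j ω ≤ m + (x - m) / (w j / s)
    have h1 : w j * (X j ω - m) ≤ ∑ i, w i * (X i ω - m) :=
      Finset.single_le_sum (f := fun i => w i * (X i ω - m))
        (fun i _ => mul_nonneg (hw i) (sub_nonneg.2 (hω i))) (Finset.mem_univ j)
    have h2 : ∑ i, w i * (X i ω - m) = ∑ i, w i * X i ω - s * m := by
      simp only [mul_sub, Finset.sum_sub_distrib, hsdef, Finset.sum_mul]
    have hj' := hwT j hj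
    rw [← sub_le_iff_le_add', le_div_iff₀ (by positivity), ← mul_div_assoc, div_le_iff₀ hs]
    nlinarith
  have step2 := step1.trans (lowerOrthant_le hWNA (fun j => m + (x - m) / (w j / s)) T)
  rw [← ENNReal.toReal_le_toReal (measure_ne_top _ _) (measure_ne_top _ _), hFx]
  calc (P {ω | ∑ j, w j * X j ω ≤ z}).toReal
      ≤ (∏ j ∈ T, P {ω | X j ω ≤ m + (x - m) / (w j / s)}).toReal :=
        ENNReal.toReal_mono (ENNReal.prod_ne_top fun j _ => measure_ne_top _ _) step2
    _ = ∏ j ∈ T, (P {ω | X k ω ≤ m + (x - m) / (w j / s)}).toReal := by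
        rw [ENNReal.toReal_prod]
        exact Finset.prod_congr rfl fun j _ => by rw [hcdf]
    _ ≤ ∏ j ∈ T, r / (r + w j / s) := by
        refine Finset.prod_le_prod (fun j _ => ENNReal.toReal_nonneg) fun j hj => ?_
        refine hFθ _ (div_pos (hwT j hj) hs) ?_
        rw [div_le_one hs]
        exact Finset.single_le_sum (fun i _ => hw i) (Finset.mem_univ j)
    _ ≤ r / (r + ∑ j ∈ T, w j / s) :=
        prod_ratio_le T _ (fun j hj => div_pos (hwT j hj) hs) hTne hr
    _ = r / (r + 1) := by rw [hθ1]

/-! ### The cost function -/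

/-- A number between the one-sided derivatives at `0` is a subgradient there. Nonnegativity of `c`
bounds the families of slopes, so that the infimum and the supremum are genuine. -/
lemma cost_subgradient {c : ℝ → ℝ} (hnn : ∀ x, 0 ≤ c x) (h0 : c 0 = 0) {q : ℝ}
    (hl : leftDerivAt c 0 ≤ q) (hr : q ≤ rightDerivAt c 0) (d : ℝ) : d * q ≤ c d := by
  rcases lt_trichotomy d 0 with hd | hd | hd
  · have hb : BddAbove ((fun d => (c (0 - d) - c 0) / (-d)) '' Set.Ioi (0 : ℝ)) := by
      refine ⟨0, ?_⟩
      rintro _ ⟨e, he, rfl⟩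
      have he' : 0 < e := he
      simp only [h0, sub_zero]
      exact div_nonpos_of_nonneg_of_nonpos (hnn _) (by linarith)
    have h1 : (c (0 - -d) - c 0) / (- -d) ≤ q :=
      (le_csSup hb ⟨-d, neg_pos.2 hd, rfl⟩).trans hl
    simp only [h0, sub_zero, zero_sub, neg_neg] at h1
    rw [div_le_iff_of_neg hd] at h1
    linarith
  · simp [hd, h0]
  · have hb : BddBelow ((fun d => (c (0 + d) - c 0) / d) '' Set.Ioi (0 : ℝ)) := by
      refine ⟨0, ?_⟩
      rintro _ ⟨e, he, rfl⟩
      have he' : 0 < e := he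
      simp only [h0, sub_zero]
      exact div_nonneg (hnn _) he'.le
    have h1 : q ≤ (c (0 + d) - c 0) / d := hr.trans (csInf_le hb ⟨d, hd, rfl⟩)
    simp only [h0, sub_zero, zero_add] at h1
    rw [le_div_iff₀ hd] at h1
    linarith

/-! ### Equilibrium -/

/-- in a super-Pareto risk sharing market with mildly monotone distortion
risk measures, if `c_{i+}'(0) ≥ p − ρ_i(X) ≥ c_{i−}'(0)` for all `i`, then
`((p,…,p), a¹,…,aⁿ)` is an equilibrium. -/
theorem stmt_14 {Ω : Type} [MeasurableSpace Ω] (P : Measure Ω) [IsProbabilityMeasure P]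
    (hatom : AtomlessProb P)
    (n : ℕ) (hn : 2 ≤ n)
    (X : Fin n → Ω → ℝ) (hSP : ∀ i, IsSuperPareto P (X i))
    (hWNA : WeaklyNegAssoc P X)
    (hid : ∀ i j, Measure.map (X i) P = Measure.map (X j) P)
    (X0 : Ω → ℝ) (hX0m : Measurable X0)
    (hX0d : Measure.map X0 P = Measure.map (X ⟨0, by omega⟩) P)
    (a : Fin n → ℝ) (ha : ∀ i, 0 < a i)
    (D : Set (Ω → ℝ)) (hDlaw : LawInvariantSet P D) (hX0D : X0 ∈ D)
    (hDloss : ∀ w : Fin n → ℝ, (∀ j, 0 ≤ w j) → ∀ b : ℝ,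
      (fun ω => (∑ j, w j * X j ω) + b) ∈ D)
    (ρ : Fin n → (Ω → ℝ) → ℝ)
    (hweak : ∀ i, ∀ U ∈ D, ∀ V ∈ D, StochDom P U V → ρ i U ≤ ρ i V)
    (hmild : ∀ i, ∀ U ∈ D, ∀ V ∈ D, P {ω | U ω < V ω} = 1 → ρ i U < ρ i V)
    -- each ρ i is a distortion risk measure, real-valued (integrable) on the market losses
    (h : Fin n → ℝ → ℝ)
    (hhmono : ∀ i, MonotoneOn (h i) (Set.Icc (0 : ℝ) 1))
    (hh0 : ∀ i, h i 0 = 0) (hh1 : ∀ i, h i 1 = 1)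
    (hrep : ∀ i, ∀ U ∈ D, ρ i U = distortionRM P (h i) U)
    (hintel : ∀ i, ∀ U ∈ D,
      IntegrableOn (fun x => h i ((P {ω | x < U ω}).toReal) - 1) (Set.Iic (0 : ℝ)) ∧
      IntegrableOn (fun x => h i ((P {ω | x < U ω}).toReal)) (Set.Ioi (0 : ℝ)))
    (c : Fin n → ℝ → ℝ) (hcconv : ∀ i, ConvexOn ℝ Set.univ (c i))
    (hcnn : ∀ i x, 0 ≤ c i x) (hc0 : ∀ i, c i 0 = 0)
    (p : ℝ) (hp : 0 ≤ p)
    (hkink : ∀ i, leftDerivAt (c i) 0 ≤ p - ρ i X0 ∧ p - ρ i X0 ≤ rightDerivAt (c i) 0) :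
    -- individual optimality of keeping the initial exposure aⁱ = aᵢ eᵢ at price (p,…,p)
    (∀ i : Fin n, ∀ w : Fin n → ℝ, (∀ j, 0 ≤ w j) →
      ρ i (fun ω => (∑ j, (if j = i then a i else 0) * X j ω)
            - ∑ j, ((if j = i then a i else 0) - (if j = i then a i else 0)) * p)
          + c i ((∑ j, |(if j = i then a i else 0)|) - a i)
        ≤ ρ i (fun ω => (∑ j, w j * X j ω)
            - ∑ j, (w j - (if j = i then a i else 0)) * p)
          + c i ((∑ j, |w j|) - a i)) ∧
    -- market clearance
    (∀ j : Fin n, ∑ i, (if j = i then a i else 0) = a j) := by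
  refine ⟨fun i w hw => ?_, fun j => by simp⟩
  have hD0 : ∀ v : Fin n → ℝ, (∀ j, 0 ≤ v j) → (fun ω => ∑ j, v j * X j ω) ∈ D := by
    intro v hv
    simpa only [add_zero] using hDloss v hv 0
  have hsingle : ∀ s : ℝ, 0 ≤ s → (fun ω => s * X i ω) ∈ D := by
    intro s hs
    have := hD0 (fun j => if j = i then s else 0) (fun j => by split_ifs <;> simp [hs])
    simpa [ite_mul] using this
  have hXiD : X i ∈ D := by simpa using hsingle 1 zero_le_one
  have hρX : ρ i (X i) = ρ i X0 := by
    rw [hrep i _ hXiD, hrep i _ hX0D]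
    exact distortionRM_congr_law (hSP i).1 hX0m ((hid i _).trans hX0d.symm)
  have hscale : ∀ s : ℝ, 0 < s → ρ i (fun ω => s * X i ω) = s * ρ i X0 := by
    intro s hs
    have hsD := hsingle s hs.le
    rw [← hρX, hrep i _ hsD, hrep i _ hXiD]
    exact distortionRM_const_mul hs (hintel i _ hXiD).1 (hintel i _ hXiD).2
      (hintel i _ hsD).1 (hintel i _ hsD).2
  have hshift : ∀ b : ℝ, ρ i (fun ω => (∑ j, w j * X j ω) - b) =
      ρ i (fun ω => ∑ j, w j * X j ω) - b := by
    intro b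
    have hb := hDloss w hw (-b)
    have hb0 := hD0 w hw
    simp only [sub_eq_add_neg]
    rw [hrep i _ hb, hrep i _ hb0]
    exact distortionRM_add_const (hintel i _ hb0).1 (hintel i _ hb0).2
      (hintel i _ hb).1 (hintel i _ hb).2
  have hport : (∑ j, w j) * ρ i X0 ≤ ρ i (fun ω => ∑ j, w j * X j ω) := by
    rcases (Finset.sum_nonneg fun j _ => hw j : 0 ≤ ∑ j, w j).eq_or_lt with hs | hs
    · have hw0 : ∀ j, w j = 0 := fun j =>
        (Finset.sum_eq_zero_iff_of_nonneg fun j _ => hw j).1 hs.symm j (Finset.mem_univ j)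
      rw [← hs, hrep i _ (hD0 w hw)]
      simp only [hw0, zero_mul, Finset.sum_const_zero]
      rw [distortionRM_zero P (hh0 i) (hh1 i)]
    · rw [← hscale _ hs]
      exact hweak i _ (hsingle _ hs.le) _ (hD0 w hw) (stochDom_portfolio hSP hWNA hid i hw hs)
  have hL : (fun ω => (∑ j, (if j = i then a i else 0) * X j ω)
      - ∑ j : Fin n, ((if j = i then a i else 0) - (if j = i then a i else 0)) * p) =
      fun ω => a i * X i ω := by
    ext ω
    simp [ite_mul]
  have hN : (∑ j : Fin n, |if j = i then a i else 0|) - a i = 0 := by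
    have : ∀ j : Fin n, |if j = i then a i else 0| = if j = i then a i else 0 := by
      intro j
      split_ifs
      · exact abs_of_pos (ha i)
      · exact abs_zero
    simp [this]
  have hW : ∑ j, |w j| = ∑ j, w j := Finset.sum_congr rfl fun j _ => abs_of_nonneg (hw j)
  have hPrem : ∑ j, (w j - (if j = i then a i else 0)) * p = ((∑ j, w j) - a i) * p := by
    rw [← Finset.sum_mul, Finset.sum_sub_distrib]
    simp
  rw [hL, hN, hc0, hW, hPrem, hshift, hscale _ (ha i)]
  have hcost := cost_subgradient (hcnn i) (hc0 i) (hkink i).1 (hkink i).2 ((∑ j, w j) - a i)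
  nlinarith

end
end
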